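/- arXiv:0705.3357 — 7 statements merged into one kernel-verified Lean document; each statement's English description precedes it below -/
import Mathlib

section
/- For all y, η with 0 < y < 1, 0 < η < 1 and every ζ ∈ ℝ with ζ ≠ 0, the function L_{(η,y)}(x) = ln[(x² + (y−η)²)/(x² + (y+η)²)] satisfies (1/√(2π)) ∫_ℝ L_{(η,y)}(x) e^{-i x ζ} dx = √(2π) · (1/|ζ|) · [e^{-(y+η)|ζ|} − e^{-|y−η| |ζ|}]. -/
open MeasureTheory

lemma P_eq (t : ℝ) (ht : 0 < t) (x : ℝ) :
    2 * t / (x ^ 2 + t ^ 2) = (2 / t) * (1 + (x / t) ^ 2)⁻¹ := by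
  have : x ^ 2 + t ^ 2 ≠ 0 := by positivity
  have : t ^ 2 + x ^ 2 ≠ 0 := by positivity
  have : 1 + (x / t) ^ 2 ≠ 0 := by positivity
  field_simp
  ring

lemma P_int (t : ℝ) (ht : 0 < t) : Integrable (fun x : ℝ => 2 * t / (x ^ 2 + t ^ 2)) := by
  simp_rw [P_eq t ht]
  exact (integrable_inv_one_add_sq.comp_div ht.ne').const_mul _

lemma P_integral (t : ℝ) (ht : 0 < t) : ∫ x : ℝ, 2 * t / (x ^ 2 + t ^ 2) = 2 * Real.pi := by
  simp_rw [P_eq t ht]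
  rw [integral_const_mul, Measure.integral_comp_div (g := fun x : ℝ => (1 + x ^ 2)⁻¹),
    integral_univ_inv_one_add_sq, abs_of_pos ht]
  simp only [smul_eq_mul]
  field_simp

lemma split_abs (t : ℝ) (ht : 0 < t) (s : ℝ) :
    Integrable (fun x : ℝ => Complex.exp (↑(s * x) * Complex.I) * (Real.exp (-(t * |x|)) : ℂ)) ∧
    ∫ x : ℝ, Complex.exp (↑(s * x) * Complex.I) * (Real.exp (-(t * |x|)) : ℂ)
      = ((2 * t / (s ^ 2 + t ^ 2) : ℝ) : ℂ) := by
  have e1 : Set.EqOn (fun x : ℝ => Complex.exp ((t + s * Complex.I) * x))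
      (fun x : ℝ => Complex.exp (↑(s * x) * Complex.I) * (Real.exp (-(t * |x|)) : ℂ))
      (Set.Iic 0) := by
    intro x hx
    simp only [Set.mem_Iic] at hx
    simp only [abs_of_nonpos hx]
    push_cast
    rw [← Complex.exp_add]
    congr 1
    ring
  have e2 : Set.EqOn (fun x : ℝ => Complex.exp ((-t + s * Complex.I) * x))
      (fun x : ℝ => Complex.exp (↑(s * x) * Complex.I) * (Real.exp (-(t * |x|)) : ℂ))
      (Set.Ioi 0) := by
    intro x hx
    simp only [Set.mem_Ioi] at hx
    simp only [abs_of_pos hx]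
    push_cast
    rw [← Complex.exp_add]
    congr 1
    ring
  have r1 : 0 < ((t + s * Complex.I : ℂ)).re := by simpa using ht
  have r2 : ((-t + s * Complex.I : ℂ)).re < 0 := by simpa using ht
  have i1 := (integrableOn_exp_mul_complex_Iic r1 0).congr_fun e1 measurableSet_Iic
  have i2 := (integrableOn_exp_mul_complex_Ioi r2 0).congr_fun e2 measurableSet_Ioi
  refine ⟨?_, ?_⟩
  · rw [← integrableOn_univ, ← Set.Iic_union_Ioi (a := (0:ℝ))]
    exact i1.union i2
  · rw [← intervalIntegral.integral_Iic_add_Ioi i1 i2, ← setIntegral_congr_fun measurableSet_Iic e1,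
      ← setIntegral_congr_fun measurableSet_Ioi e2, integral_exp_mul_complex_Iic r1,
      integral_exp_mul_complex_Ioi r2]
    have n1 : (t + s * Complex.I : ℂ) ≠ 0 := by
      intro h; rw [h] at r1; simp at r1
    have n2 : (-t + s * Complex.I : ℂ) ≠ 0 := by
      intro h; rw [h] at r2; simp at r2
    have n3 : ((s:ℂ) ^ 2 + t ^ 2) ≠ 0 := by
      have : s ^ 2 + t ^ 2 ≠ 0 := by positivity
      exact_mod_cast this
    push_cast
    simp only [mul_zero, Complex.exp_zero]
    rw [div_add_div _ _ n1 n2, div_eq_div_iff (mul_ne_zero n1 n2) n3]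
    linear_combination (2 * (t:ℂ) * s ^ 2) * (-1 : ℂ) * Complex.I_sq

lemma poisson (t : ℝ) (ht : 0 < t) (ζ : ℝ) :
    ∫ x : ℝ, ((2 * t / (x ^ 2 + t ^ 2) : ℝ) : ℂ) * Complex.exp (-(Complex.I * x * ζ))
      = ((2 * Real.pi * Real.exp (-(t * |ζ|)) : ℝ) : ℂ) := by
  let F : ℝ → ℂ := fun x => (Real.exp (-(t * |x|)) : ℂ)
  have hc : Continuous F := by fun_prop
  have hF : Integrable F := by simpa [F] using (split_abs t ht 0).1
  have hFF : FourierTransform.fourier F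
      = fun w : ℝ => ((2 * t / ((-2 * Real.pi * w) ^ 2 + t ^ 2) : ℝ) : ℂ) := by
    ext w
    rw [Real.fourier_real_eq_integral_exp_smul, ← (split_abs t ht _).2]
    congr 1 with x
    rw [smul_eq_mul]
    congr 4
    ring
  have hp : (-2 * Real.pi) ≠ 0 := by simp [Real.pi_ne_zero]
  have hI : Integrable (FourierTransform.fourier F) := by
    rw [hFF]
    exact ((P_int t ht).comp_mul_left' hp).ofReal
  have := congrFun (hc.fourierInv_fourier_eq hF hI) ζ
  rw [Real.fourierInv_eq', hFF] at this
  have h2 := Measure.integral_comp_mul_left (fun x : ℝ =>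
    ((2 * t / (x ^ 2 + t ^ 2) : ℝ) : ℂ) * Complex.exp (-(Complex.I * x * ζ))) (-2 * Real.pi)
  have h3 : ∫ w : ℝ, ((2 * t / ((-2 * Real.pi * w) ^ 2 + t ^ 2) : ℝ) : ℂ) *
      Complex.exp (-(Complex.I * ((-2 * Real.pi * w : ℝ) : ℂ) * ζ)) = F ζ := by
    rw [← this]
    congr 1 with w
    rw [smul_eq_mul, mul_comm]
    congr 2
    simp
    ring
  rw [h3] at h2
  have h4 : |(-2 * Real.pi)⁻¹| = (2 * Real.pi)⁻¹ := by
    rw [abs_inv, abs_mul, abs_of_pos Real.pi_pos]; simp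
  rw [h4] at h2
  have hp' : (Real.pi : ℂ) ≠ 0 := by exact_mod_cast Real.pi_ne_zero
  have h5 : ((2 * Real.pi * Real.exp (-(t * |ζ|)) : ℝ) : ℂ) = 2 * Real.pi * F ζ := by
    simp [F]
  rw [h5, h2, Complex.real_smul]
  generalize (∫ x : ℝ, ((2 * t / (x ^ 2 + t ^ 2) : ℝ) : ℂ) *
    Complex.exp (-(Complex.I * x * ζ))) = A
  push_cast
  field_simp

lemma log_eq (a b x : ℝ) (hx : x ≠ 0) :
    ∫ t in a..b, 2 * t / (x ^ 2 + t ^ 2) = - Real.log ((x ^ 2 + a ^ 2) / (x ^ 2 + b ^ 2)) := by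
  have hpos : ∀ t : ℝ, x ^ 2 + t ^ 2 ≠ 0 := fun t => by positivity
  rw [Real.log_div (hpos a) (hpos b), neg_sub]
  refine intervalIntegral.integral_eq_sub_of_hasDerivAt
    (f := fun t => Real.log (x ^ 2 + t ^ 2)) ?_ ?_
  · intro t _
    have := (((hasDerivAt_id t).pow 2).const_add (x ^ 2)).log (hpos t)
    simpa using this
  · apply Continuous.intervalIntegrable
    exact Continuous.div (by fun_prop) (by fun_prop) hpos

lemma main_int (a b ζ : ℝ) (ha : 0 ≤ a) (hab : a ≤ b) (hζ : ζ ≠ 0) :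
    ∫ x : ℝ, ((Real.log ((x ^ 2 + a ^ 2) / (x ^ 2 + b ^ 2)) : ℝ) : ℂ) *
            Complex.exp (-(Complex.I * x * ζ)) =
      ((2 * Real.pi * (1 / |ζ|) * (Real.exp (-(b * |ζ|)) - Real.exp (-(a * |ζ|))) : ℝ) : ℂ) := by
  let f : ℝ → ℝ → ℂ := fun t x =>
    ((2 * t / (x ^ 2 + t ^ 2) : ℝ) : ℂ) * Complex.exp (-(Complex.I * x * ζ))
  have hnorm : ∀ t x, 0 < t → ‖f t x‖ = 2 * t / (x ^ 2 + t ^ 2) := by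
    intro t x ht
    have h0 : 0 ≤ 2 * t / (x ^ 2 + t ^ 2) := by positivity
    simp only [f, norm_mul, Complex.norm_real, Complex.norm_exp, Real.norm_of_nonneg h0]
    simp
  have hmeas : Measurable (Function.uncurry f) := by
    unfold Function.uncurry
    simp only [f]
    fun_prop
  have hpos : ∀ᵐ t ∂(volume.restrict (Set.Ioc a b)), 0 < t := by
    filter_upwards [ae_restrict_mem measurableSet_Ioc] with t ht
    exact lt_of_le_of_lt ha ht.1
  have hint : Integrable (Function.uncurry f)
      ((volume.restrict (Set.Ioc a b)).prod volume) := by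
    rw [integrable_prod_iff hmeas.aestronglyMeasurable]
    refine ⟨?_, ?_⟩
    · filter_upwards [hpos] with t ht
      refine (P_int t ht).mono' (hmeas.comp measurable_prodMk_left).aestronglyMeasurable ?_
      filter_upwards with x
      exact (hnorm t x ht).le
    · have : Integrable (fun _ : ℝ => 2 * Real.pi) (volume.restrict (Set.Ioc a b)) :=
        integrable_const _
      refine this.congr ?_
      filter_upwards [hpos] with t ht
      rw [← P_integral t ht]
      congr 1 with x
      exact (hnorm t x ht).symm
  have hswap := integral_integral_swap hint
  have hL : ∫ t in Set.Ioc a b, ∫ x, f t x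
      = ∫ t in Set.Ioc a b, ((2 * Real.pi * Real.exp (-(t * |ζ|)) : ℝ) : ℂ) := by
    apply integral_congr_ae
    filter_upwards [hpos] with t ht
    exact poisson t ht ζ
  have hR : ∫ x, ∫ t in Set.Ioc a b, f t x = ∫ x : ℝ,
      -(((Real.log ((x ^ 2 + a ^ 2) / (x ^ 2 + b ^ 2)) : ℝ) : ℂ) *
            Complex.exp (-(Complex.I * x * ζ))) := by
    apply integral_congr_ae
    filter_upwards [Measure.ae_ne volume (0:ℝ)] with x hx
    simp only [f]
    rw [integral_mul_const, integral_complex_ofReal, ← intervalIntegral.integral_of_le hab, log_eq a b x hx]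
    push_cast
    ring
  rw [hL, hR, integral_neg, integral_complex_ofReal, ← intervalIntegral.integral_of_le hab] at hswap
  have hz : |ζ| ≠ 0 := by simpa using hζ
  have hE : ∫ t in a..b, 2 * Real.pi * Real.exp (-(t * |ζ|)) =
      - (2 * Real.pi * (1 / |ζ|) * (Real.exp (-(b * |ζ|)) - Real.exp (-(a * |ζ|)))) := by
    have := intervalIntegral.integral_eq_sub_of_hasDerivAt
      (f := fun t => - (2 * Real.pi * (1 / |ζ|)) * Real.exp (-(t * |ζ|)))
      (f' := fun t => 2 * Real.pi * Real.exp (-(t * |ζ|))) (a := a) (b := b) ?_ ?_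
    · rw [this]; ring
    · intro t _
      have := ((((hasDerivAt_id t).mul_const |ζ|).neg).exp).const_mul (- (2 * Real.pi * (1 / |ζ|)))
      refine HasDerivAt.congr_deriv this ?_
      simp only [Pi.neg_apply, id]
      field_simp
    · apply Continuous.intervalIntegrable
      fun_prop
  rw [hE] at hswap
  rw [← neg_inj, ← hswap]
  push_cast
  rfl

/-- the Fourier transform (normalization `ĝ(ζ) = (1/√(2π)) ∫ g(x) e^{-ixζ} dx`)
of `L_{(η,y)}(x) = ln[(x² + (y-η)²)/(x² + (y+η)²)]`, for `0 < y < 1`, `0 < η < 1` and `ζ ≠ 0`,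
equals `√(2π) (1/|ζ|) [e^{-(y+η)|ζ|} - e^{-|y-η||ζ|}]`. -/
theorem fourier_transform_L_kernel (y η : ℝ) (hy0 : 0 < y) (hy1 : y < 1)
    (hη0 : 0 < η) (hη1 : η < 1) (ζ : ℝ) (hζ : ζ ≠ 0) :
    ((1 / Real.sqrt (2 * Real.pi) : ℝ) : ℂ) *
        ∫ x : ℝ,
          ((Real.log ((x ^ 2 + (y - η) ^ 2) / (x ^ 2 + (y + η) ^ 2)) : ℝ) : ℂ) *
            Complex.exp (-(Complex.I * x * ζ)) =
      ((Real.sqrt (2 * Real.pi) * (1 / |ζ|) *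
          (Real.exp (-((y + η) * |ζ|)) - Real.exp (-(|y - η| * |ζ|))) : ℝ) : ℂ) := by
  have h := main_int |y - η| (y + η) ζ (abs_nonneg _)
    (by rw [abs_le]; constructor <;> linarith) hζ
  simp only [sq_abs] at h
  rw [h, ← Complex.ofReal_mul]
  congr 1
  have hs : Real.sqrt (2 * Real.pi) ≠ 0 := by positivity
  have h2 : 2 * Real.pi = Real.sqrt (2 * Real.pi) * Real.sqrt (2 * Real.pi) :=
    (Real.mul_self_sqrt (by positivity)).symm
  generalize Real.sqrt (2 * Real.pi) = s at *
  rw [h2]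
  field_simp
end

section
/- Let 0 < ε < 1 and let φ, φ_ε ∈ L²(ℝ) satisfy ‖φ_ε − φ‖_{L²(ℝ)} < ε. Assume ζ ↦ e^{|ζ|} φ̂(ζ) belongs to L²(ℝ). Define φ̃_ε(x) = (1/√(2π)) ∫_{|ζ| < ε^{-1/2}} φ̂_ε(ζ) e^{i ζ x} dζ. Then for almost every x ∈ ℝ, |φ̃_ε(x) − φ(x)| ≤ (1/√(2π)) [√2 · ε^{-1/4} ‖φ − φ_ε‖_{L²(ℝ)} + √(2/3) · ‖e^{|ζ|} φ̂(ζ)‖_{L²(ℝ)} · ε^{3/4}]; in particular ess sup_x |φ̃_ε(x) − φ(x)| < C₂ ε^{3/4}, where C₂ = (1/√(2π)) [√2 + √(2/3) ‖e^{|ζ|} φ̂(ζ)‖_{L²(ℝ)}]. -/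
open MeasureTheory

/-- The Fourier transform of a real-valued function on `ℝ`, with the normalization
`ĝ(ζ) = (1/√(2π)) ∫ g(x) e^{-ixζ} dx`. -/
noncomputable def ft (g : ℝ → ℝ) (ζ : ℝ) : ℂ :=
  ((1 / Real.sqrt (2 * Real.pi) : ℝ) : ℂ) *
    ∫ x : ℝ, (g x : ℂ) * Complex.exp (-(Complex.I * x * ζ))

/-- The frequency-truncated reconstruction
`φ̃_ε(x) = (1/√(2π)) ∫_{|ζ| < ε^{-1/2}} φ̂_ε(ζ) e^{iζx} dζ`. -/
noncomputable def truncRecon (φε : ℝ → ℝ) (ε : ℝ) (x : ℝ) : ℂ :=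
  ((1 / Real.sqrt (2 * Real.pi) : ℝ) : ℂ) *
    ∫ ζ in {ζ : ℝ | |ζ| < (Real.sqrt ε)⁻¹}, ft φε ζ * Complex.exp (Complex.I * ζ * x)

open scoped FourierTransform SchwartzMap

lemma aux_l2_fourier {f : ℝ → ℂ} (hf1 : Integrable f) (hf : MemLp f 2 (volume : Measure ℝ)) :
    ((𝓕 (hf.toLp f) : Lp ℂ 2 (volume : Measure ℝ)) : ℝ → ℂ) =ᵐ[volume] 𝓕 f := by
  have hcont : Continuous (𝓕 f) :=
    VectorFourier.fourierIntegral_continuous Real.continuous_fourierChar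
      (L := innerₗ ℝ) continuous_inner hf1
  apply ae_eq_of_integral_contDiff_smul_eq
  · exact (Lp.memLp _).locallyIntegrable (by norm_num)
  · exact hcont.locallyIntegrable
  intro g g_smooth g_cpt
  have hg₁ : HasCompactSupport (Complex.ofRealCLM ∘ g) := g_cpt.comp_left rfl
  have hg₂ : ContDiff ℝ ((⊤ : ℕ∞) : WithTop ℕ∞) (Complex.ofRealCLM ∘ g) := by fun_prop
  set G : 𝓢(ℝ, ℂ) := hg₁.toSchwartzMap hg₂ with hG
  have hGg : ∀ x, G x = (g x : ℂ) := fun x => rfl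
  have h1 := congrArg (fun T => T G) (Lp.fourier_toTemperedDistribution_eq (hf.toLp f))
  simp only [TemperedDistribution.fourier_apply, Lp.toTemperedDistribution_apply] at h1
  have h2 : ∫ x, (𝓕 G) x • (hf.toLp f) x = ∫ x, (𝓕 G) x • f x := by
    apply integral_congr_ae
    filter_upwards [hf.coeFn_toLp] with x hx
    rw [hx]
  have h3 : ∫ ξ, 𝓕 (G : ℝ → ℂ) ξ • f ξ = ∫ x, G x • 𝓕 f x := by
    simpa using! VectorFourier.integral_bilin_fourierIntegral_eq_flip
      (ContinuousLinearMap.lsmul ℂ ℂ) (L := innerₗ ℝ)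
      Real.continuous_fourierChar continuous_inner G.integrable hf1
  rw [h2] at h1
  have h4 : ∫ x, (𝓕 G) x • f x = ∫ ξ, 𝓕 (G : ℝ → ℂ) ξ • f ξ := by
    rw [SchwartzMap.fourier_coe]
  rw [h4, h3] at h1
  simp only [hGg, Complex.coe_smul] at h1
  exact h1.symm

lemma aux_l2_fourierInv {f : ℝ → ℂ} (hf1 : Integrable f) (hf : MemLp f 2 (volume : Measure ℝ)) :
    ((𝓕⁻ (hf.toLp f) : Lp ℂ 2 (volume : Measure ℝ)) : ℝ → ℂ) =ᵐ[volume] 𝓕⁻ f := by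
  have hcont : Continuous (𝓕⁻ f) := by
    have : Continuous (𝓕 f) :=
      VectorFourier.fourierIntegral_continuous Real.continuous_fourierChar
        (L := innerₗ ℝ) continuous_inner hf1
    have h : 𝓕⁻ f = fun x => 𝓕 f (-x) := by
      funext x; exact Real.fourierInv_eq_fourier_neg f x
    rw [h]; fun_prop
  apply ae_eq_of_integral_contDiff_smul_eq
  · exact (Lp.memLp _).locallyIntegrable (by norm_num)
  · exact hcont.locallyIntegrable
  intro g g_smooth g_cpt
  have hg₁ : HasCompactSupport (Complex.ofRealCLM ∘ g) := g_cpt.comp_left rfl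
  have hg₂ : ContDiff ℝ ((⊤ : ℕ∞) : WithTop ℕ∞) (Complex.ofRealCLM ∘ g) := by fun_prop
  set G : 𝓢(ℝ, ℂ) := hg₁.toSchwartzMap hg₂ with hG
  have hGg : ∀ x, G x = (g x : ℂ) := fun x => rfl
  have h1 := congrArg (fun T => T G) (Lp.fourierInv_toTemperedDistribution_eq (hf.toLp f))
  simp only [TemperedDistribution.fourierInv_apply, Lp.toTemperedDistribution_apply] at h1
  have h2 : ∫ x, (𝓕⁻ G) x • (hf.toLp f) x = ∫ x, (𝓕⁻ G) x • f x := by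
    apply integral_congr_ae
    filter_upwards [hf.coeFn_toLp] with x hx
    rw [hx]
  have h3 : ∫ ξ, 𝓕 (G : ℝ → ℂ) ξ • f (-ξ) = ∫ x, G x • 𝓕 (fun y => f (-y)) x := by
    simpa using! VectorFourier.integral_bilin_fourierIntegral_eq_flip
      (ContinuousLinearMap.lsmul ℂ ℂ) (L := innerₗ ℝ)
      Real.continuous_fourierChar continuous_inner G.integrable hf1.comp_neg
  rw [h2] at h1
  have h4 : ∫ x, (𝓕⁻ G) x • f x = ∫ ξ, 𝓕 (G : ℝ → ℂ) ξ • f (-ξ) := by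
    rw [← integral_neg_eq_self, SchwartzMap.fourierInv_coe]
    simp only [Real.fourierInv_eq_fourier_neg, neg_neg]
  rw [h4, h3, ← Real.fourierInv_eq_fourier_comp_neg] at h1
  simp only [hGg, Complex.coe_smul] at h1
  exact h1.symm

lemma aux_plancherel {f : ℝ → ℂ} (hf1 : Integrable f) (hf : MemLp f 2 (volume : Measure ℝ)) :
    MemLp (𝓕 f) 2 (volume : Measure ℝ) ∧ ∫ x, ‖𝓕 f x‖ ^ 2 = ∫ x, ‖f x‖ ^ 2 := by
  have h := aux_l2_fourier hf1 hf
  have hm : MemLp (𝓕 f) 2 (volume : Measure ℝ) := (memLp_congr_ae h).1 (Lp.memLp _)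
  refine ⟨hm, ?_⟩
  have key : ∀ {u : ℝ → ℂ} (U : Lp ℂ 2 (volume : Measure ℝ)), (U : ℝ → ℂ) =ᵐ[volume] u →
      ((∫ x, ‖u x‖ ^ 2 : ℝ) : ℂ) = inner ℂ U U := by
    intro u U hu
    rw [L2.inner_def, ← integral_complex_ofReal]
    apply integral_congr_ae
    filter_upwards [hu] with x hx
    rw [hx, inner_self_eq_norm_sq_to_K]
    simp
  have h1 := key _ h
  have h2 := key _ hf.coeFn_toLp
  rw [Lp.inner_fourier_eq, ← h2] at h1
  exact_mod_cast h1

lemma aux_inversion {f : ℝ → ℂ} (hf1 : Integrable f) (hf : MemLp f 2 (volume : Measure ℝ))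
    (hF : Integrable (𝓕 f)) : 𝓕⁻ (𝓕 f) =ᵐ[volume] f := by
  have h := aux_l2_fourier hf1 hf
  obtain ⟨hm, -⟩ := aux_plancherel hf1 hf
  have h2 := aux_l2_fourierInv hF hm
  have h3 : hm.toLp (𝓕 f) = 𝓕 (hf.toLp f) := by
    apply Lp.ext
    exact hm.coeFn_toLp.trans h.symm
  rw [h3, FourierTransform.fourierInv_fourier_eq] at h2
  exact h2.symm.trans hf.coeFn_toLp

lemma aux_cs {α : Type*} [MeasurableSpace α] {μ : Measure α} {f g : α → ℂ}
    (hf : MemLp f 2 μ) (hg : MemLp g 2 μ) :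
    ∫ a, ‖f a‖ * ‖g a‖ ∂μ ≤ √(∫ a, ‖f a‖ ^ 2 ∂μ) * √(∫ a, ‖g a‖ ^ 2 ∂μ) := by
  have := integral_mul_norm_le_Lp_mul_Lq (μ := μ) (p := 2) (q := 2)
    (Real.HolderConjugate.two_two) (f := f) (g := g) (by simpa using hf) (by simpa using hg)
  simpa [Real.sqrt_eq_rpow] using this

lemma aux_ft_eq (g : ℝ → ℝ) (ζ : ℝ) : ft g ζ =
    ((1 / Real.sqrt (2 * Real.pi) : ℝ) : ℂ) * 𝓕 (fun x => (g x : ℂ)) (ζ * (2 * Real.pi)⁻¹) := by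
  rw [ft, Real.fourier_real_eq_integral_exp_smul]
  congr 2
  funext x
  rw [smul_eq_mul, mul_comm]
  congr 2
  have : (Real.pi : ℂ) ≠ 0 := by exact_mod_cast Real.pi_ne_zero
  push_cast
  field_simp

lemma aux_ft_plancherel {g : ℝ → ℝ} (hg1 : Integrable g) (hg : MemLp g 2 (volume : Measure ℝ)) :
    MemLp (ft g) 2 (volume : Measure ℝ) ∧ ∫ x, ‖ft g x‖ ^ 2 = ∫ x, g x ^ 2 := by
  have hpi : 0 < 2 * Real.pi := by positivity
  obtain ⟨hm, he⟩ := aux_plancherel hg1.ofReal hg.ofReal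
  have hint : ∫ x, ‖ft g x‖ ^ 2 = ∫ x, g x ^ 2 := by
    simp only [aux_ft_eq, norm_mul, mul_pow]
    rw [integral_const_mul, Measure.integral_comp_mul_right
      (fun y => ‖𝓕 (fun x => (g x : ℂ)) y‖ ^ 2)]
    have := he
    simp only [Complex.coe_algebraMap] at this
    rw [this]
    simp only [Complex.norm_real, Real.norm_eq_abs, sq_abs, inv_inv, smul_eq_mul,
      abs_of_pos hpi, div_pow, Real.sq_sqrt hpi.le]
    field_simp
  refine ⟨?_, hint⟩
  have hcont : Continuous (𝓕 (fun x => (g x : ℂ))) :=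
    VectorFourier.fourierIntegral_continuous Real.continuous_fourierChar
      (L := innerₗ ℝ) continuous_inner hg1.ofReal
  have hc : Continuous (ft g) := by
    have : ft g = _ := funext (aux_ft_eq g)
    rw [this]; fun_prop
  rw [memLp_two_iff_integrable_sq_norm hc.aestronglyMeasurable]
  have hI := (memLp_two_iff_integrable_sq_norm hcont.aestronglyMeasurable).1 hm
  simp only [aux_ft_eq, norm_mul, mul_pow]
  exact (hI.comp_mul_right' (inv_ne_zero hpi.ne')).const_mul _

lemma aux_ft_inversion {g : ℝ → ℝ} (hg1 : Integrable g) (hg : MemLp g 2 (volume : Measure ℝ))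
    (hF : Integrable (ft g)) : ∀ᵐ x : ℝ, (g x : ℂ) = ((1 / Real.sqrt (2 * Real.pi) : ℝ) : ℂ) *
      ∫ ζ, ft g ζ * Complex.exp (Complex.I * ζ * x) := by
  have hpi : 0 < 2 * Real.pi := by positivity
  have hpi' : (Real.pi : ℂ) ≠ 0 := by exact_mod_cast Real.pi_ne_zero
  have hs : ((1 / Real.sqrt (2 * Real.pi) : ℝ) : ℂ) ≠ 0 := by
    exact_mod_cast (by positivity : (0:ℝ) < 1 / Real.sqrt (2 * Real.pi)).ne'
  have hF' : Integrable (𝓕 (fun x => (g x : ℂ))) := by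
    have := (hF.const_mul (((1 / Real.sqrt (2 * Real.pi) : ℝ) : ℂ)⁻¹)).comp_mul_right' hpi.ne'
    refine this.congr (Filter.Eventually.of_forall fun x => ?_)
    simp only [aux_ft_eq]
    rw [inv_mul_cancel_left₀ hs, mul_assoc, mul_inv_cancel₀ hpi.ne', mul_one]
  filter_upwards [aux_inversion hg1.ofReal hg.ofReal hF'] with x hx
  refine hx.symm.trans ?_
  rw [Real.fourierInv_eq']
  have := Measure.integral_comp_mul_right (fun ζ : ℝ => ((1 / Real.sqrt (2 * Real.pi) : ℝ) : ℂ) *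
      (ft g ζ * Complex.exp (Complex.I * ζ * x))) (2 * Real.pi)
  rw [← integral_const_mul]
  rw [abs_of_pos (inv_pos.2 hpi)] at this
  rw [← inv_smul_eq_iff₀ (inv_pos.2 hpi).ne', inv_inv] at this
  rw [← this, ← integral_smul]
  congr 1
  funext ζ
  rw [aux_ft_eq, mul_assoc ζ, mul_inv_cancel₀ hpi.ne', mul_one, smul_eq_mul, Complex.real_smul]
  have h2 : (((2 * Real.pi : ℝ)) : ℂ) * (((1 / Real.sqrt (2 * Real.pi) : ℝ) : ℂ) *
    ((1 / Real.sqrt (2 * Real.pi) : ℝ) : ℂ)) = 1 := by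
    norm_cast
    have := Real.mul_self_sqrt hpi.le
    field_simp
    nlinarith
  have h3 : Complex.exp (↑(2 * Real.pi * inner ℝ ζ x) * Complex.I) =
      Complex.exp (Complex.I * ↑(ζ * (2 * Real.pi)) * ↑x) := by
    congr 1
    simp
    ring
  rw [h3]
  set c := ((1 / Real.sqrt (2 * Real.pi) : ℝ) : ℂ)
  set E := Complex.exp (Complex.I * ↑(ζ * (2 * Real.pi)) * ↑x)
  linear_combination (-(𝓕 (fun x => (g x : ℂ)) ζ) * E) * h2

lemma aux_exp {R : ℝ} (hR : 1 ≤ R) : Real.exp (-(2 * R)) ≤ 2 / 3 * (R ^ 3)⁻¹ := by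
  have h := Real.sum_le_exp_of_nonneg (x := 2 * R) (by linarith) 5
  simp [Finset.sum_range_succ, Nat.factorial] at h
  rw [Real.exp_neg, ← div_eq_mul_inv, inv_eq_one_div, div_le_div_iff₀ (by positivity) (by positivity)]
  have : R ^ 3 ≤ R ^ 4 := pow_le_pow_right₀ hR (by norm_num)
  nlinarith [sq_nonneg R, pow_pos (by linarith : 0 < R) 3]

lemma aux_tail {R : ℝ} (hR : 0 ≤ R) :
    IntegrableOn (fun ζ : ℝ => Real.exp (-(2 * |ζ|))) {ζ : ℝ | |ζ| < R}ᶜ ∧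
    ∫ ζ in {ζ : ℝ | |ζ| < R}ᶜ, Real.exp (-(2 * |ζ|)) = Real.exp (-(2 * R)) := by
  have hset : ({ζ : ℝ | |ζ| < R}ᶜ : Set ℝ) =ᵐ[volume] (Set.Iic (-R) ∪ Set.Ioi R : Set ℝ) := by
    have : ({ζ : ℝ | |ζ| < R}ᶜ : Set ℝ) = Set.Iic (-R) ∪ Set.Ici R := by
      ext x
      simp only [Set.mem_compl_iff, Set.mem_ofPred_eq, not_lt, le_abs, Set.mem_union, Set.mem_Iic,
        Set.mem_Ici]
      constructor <;> rintro (h | h) <;> [right; left; right; left] <;> linarith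
    rw [this]
    exact (Filter.EventuallyEq.refl _ _).union Ioi_ae_eq_Ici.symm
  have e1 : Set.EqOn (fun ζ : ℝ => Real.exp (-(2 * |ζ|))) (fun ζ => Real.exp (2 * ζ))
      (Set.Iic (-R)) := by
    intro x hx
    simp only [Set.mem_Iic] at hx
    simp only [abs_of_nonpos (by linarith : x ≤ 0)]
    congr 1; ring
  have e2 : Set.EqOn (fun ζ : ℝ => Real.exp (-(2 * |ζ|))) (fun ζ => Real.exp (-2 * ζ))
      (Set.Ioi R) := by
    intro x hx
    simp only [Set.mem_Ioi] at hx
    simp only [abs_of_pos (by linarith : 0 < x)]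
    congr 1; ring
  have i1 : IntegrableOn (fun ζ : ℝ => Real.exp (-(2 * |ζ|))) (Set.Iic (-R)) :=
    (integrableOn_exp_mul_Iic (by norm_num) _).congr_fun e1.symm measurableSet_Iic
  have i2 : IntegrableOn (fun ζ : ℝ => Real.exp (-(2 * |ζ|))) (Set.Ioi R) :=
    (integrableOn_exp_mul_Ioi (by norm_num) _).congr_fun e2.symm measurableSet_Ioi
  refine ⟨(i1.union i2).congr_set_ae hset, ?_⟩
  rw [setIntegral_congr_set hset, setIntegral_union _ measurableSet_Ioi i1 i2,
    setIntegral_congr_fun measurableSet_Iic e1, setIntegral_congr_fun measurableSet_Ioi e2,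
    integral_exp_mul_Iic (by norm_num), integral_exp_mul_Ioi (by norm_num)]
  · have : (2 * -R) = -(2 * R) := by ring
    rw [this, neg_mul]; ring
  · rw [Set.disjoint_left]
    intro x hx hx'
    simp only [Set.mem_Iic, Set.mem_Ioi] at hx hx'
    linarith

/-- if `‖φ_ε - φ‖_{L²} < ε` and `e^{|ζ|} φ̂ ∈ L²(ℝ)`, then for a.e. `x`,
`|φ̃_ε(x) - φ(x)| ≤ (1/√(2π)) [√2 ε^{-1/4} ‖φ - φ_ε‖_{L²} + √(2/3) ‖e^{|ζ|} φ̂‖_{L²} ε^{3/4}]`,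
and this bound is `< C₂ ε^{3/4}` with
`C₂ = (1/√(2π)) [√2 + √(2/3) ‖e^{|ζ|} φ̂‖_{L²}]`. -/
theorem trunc_recon_sup_estimate (ε : ℝ) (hε0 : 0 < ε) (hε1 : ε < 1)
    (φ φε : ℝ → ℝ)
    (hφ1 : Integrable φ) (hφ2 : MemLp φ 2 (volume : Measure ℝ))
    (hφε1 : Integrable φε) (hφε2 : MemLp φε 2 (volume : Measure ℝ))
    (hnear : Real.sqrt (∫ x : ℝ, (φε x - φ x) ^ 2) < ε)
    (hhat : MemLp (fun ζ : ℝ => ((Real.exp |ζ| : ℝ) : ℂ) * ft φ ζ) 2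
      (volume : Measure ℝ)) :
    (∀ᵐ x : ℝ, ‖truncRecon φε ε x - (φ x : ℂ)‖ ≤
        (1 / Real.sqrt (2 * Real.pi)) *
          (Real.sqrt 2 * (ε ^ ((1 : ℝ) / 4))⁻¹ * Real.sqrt (∫ x : ℝ, (φ x - φε x) ^ 2) +
            Real.sqrt (2 / 3) *
              Real.sqrt (∫ ζ : ℝ, ‖((Real.exp |ζ| : ℝ) : ℂ) * ft φ ζ‖ ^ 2) *
              ε ^ ((3 : ℝ) / 4))) ∧
      (1 / Real.sqrt (2 * Real.pi)) *
          (Real.sqrt 2 * (ε ^ ((1 : ℝ) / 4))⁻¹ * Real.sqrt (∫ x : ℝ, (φ x - φε x) ^ 2) +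
            Real.sqrt (2 / 3) *
              Real.sqrt (∫ ζ : ℝ, ‖((Real.exp |ζ| : ℝ) : ℂ) * ft φ ζ‖ ^ 2) *
              ε ^ ((3 : ℝ) / 4)) <
        (1 / Real.sqrt (2 * Real.pi)) *
            (Real.sqrt 2 +
              Real.sqrt (2 / 3) *
                Real.sqrt (∫ ζ : ℝ, ‖((Real.exp |ζ| : ℝ) : ℂ) * ft φ ζ‖ ^ 2)) *
          ε ^ ((3 : ℝ) / 4) := by
  have hs0 : 0 < 1 / Real.sqrt (2 * Real.pi) := by positivity
  have hq : (0 : ℝ) < ε ^ ((1 : ℝ) / 4) := Real.rpow_pos_of_pos hε0 _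
  have hq4 : (ε ^ ((1 : ℝ) / 4)) ^ 4 = ε := by
    rw [← Real.rpow_natCast, ← Real.rpow_mul hε0.le]; norm_num
  have hq3 : ε ^ ((3 : ℝ) / 4) = (ε ^ ((1 : ℝ) / 4)) ^ 3 := by
    rw [← Real.rpow_natCast, ← Real.rpow_mul hε0.le]; norm_num
  have hsq : Real.sqrt ε = (ε ^ ((1 : ℝ) / 4)) ^ 2 := by
    rw [Real.sqrt_eq_rpow, ← Real.rpow_natCast, ← Real.rpow_mul hε0.le]; norm_num
  have hsymm : ∫ x : ℝ, (φ x - φε x) ^ 2 = ∫ x : ℝ, (φε x - φ x) ^ 2 := by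
    congr 1; funext x; ring
  rw [hsymm, hq3]
  have hq1 : ε ^ ((1 : ℝ) / 4) ≤ 1 := Real.rpow_le_one hε0.le hε1.le (by norm_num)
  obtain ⟨R, hRdef⟩ : ∃ R, R = (Real.sqrt ε)⁻¹ := ⟨_, rfl⟩
  have hRq : R = ((ε ^ ((1 : ℝ) / 4))⁻¹) ^ 2 := by rw [hRdef, hsq, inv_pow]
  set q := ε ^ ((1 : ℝ) / 4) with hqdef
  set N := Real.sqrt (∫ x : ℝ, (φε x - φ x) ^ 2) with hN
  set M := Real.sqrt (∫ ζ : ℝ, ‖((Real.exp |ζ| : ℝ) : ℂ) * ft φ ζ‖ ^ 2) with hM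
  have hs2 : 0 < Real.sqrt 2 := by positivity
  have hR1 : 1 ≤ R := by
    rw [hRq]; exact one_le_pow₀ (one_le_inv₀ hq |>.2 hq1)
  have hR0 : 0 ≤ R := by linarith
  refine ⟨?_, ?_⟩
  swap
  · rw [mul_assoc (1 / Real.sqrt (2 * Real.pi)) (Real.sqrt 2 + Real.sqrt (2 / 3) * M)]
    apply mul_lt_mul_of_pos_left _ hs0
    have h1 : q⁻¹ * N < q ^ 3 := by
      rw [inv_mul_lt_iff₀ hq]
      calc N < ε := hnear
        _ = q * q ^ 3 := by rw [← hq4]; ring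
    nlinarith [mul_lt_mul_of_pos_left h1 hs2]
  -- integrability
  have hEmeas : AEStronglyMeasurable (fun ζ : ℝ => ((Real.exp (-|ζ|) : ℝ) : ℂ)) volume :=
    Continuous.aestronglyMeasurable (by fun_prop)
  have hEsq : ∀ ζ : ℝ, ‖((Real.exp (-|ζ|) : ℝ) : ℂ)‖ ^ 2 = Real.exp (-(2 * |ζ|)) := by
    intro ζ
    rw [Complex.norm_real, Real.norm_eq_abs, sq_abs, ← Real.exp_nat_mul]
    congr 1; push_cast; ring
  have hE : MemLp (fun ζ : ℝ => ((Real.exp (-|ζ|) : ℝ) : ℂ)) 2 volume := by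
    rw [memLp_two_iff_integrable_sq_norm hEmeas]
    simp only [hEsq]
    have h := (aux_tail (le_refl (0 : ℝ))).1
    have hu : ({ζ : ℝ | |ζ| < 0}ᶜ : Set ℝ) = Set.univ := by
      ext x; simp
    rwa [hu, integrableOn_univ] at h
  have hprod : ∀ ζ : ℝ, ((Real.exp (-|ζ|) : ℝ) : ℂ) * (((Real.exp |ζ| : ℝ) : ℂ) * ft φ ζ)
      = ft φ ζ := by
    intro ζ
    rw [← mul_assoc, ← Complex.ofReal_mul, ← Real.exp_add]
    simp
  have hF : Integrable (ft φ) := by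
    have := hE.integrable_mul hhat
    refine this.congr (Filter.Eventually.of_forall fun ζ => ?_)
    exact hprod ζ
  obtain ⟨hd2, hdP⟩ := aux_ft_plancherel (hφε1.sub hφ1) (hφε2.sub hφ2)
  obtain ⟨hφε2', -⟩ := aux_ft_plancherel hφε1 hφε2
  have hchar : ∀ (x ζ : ℝ), ‖Complex.exp (Complex.I * ζ * x)‖ = 1 := by
    intro x ζ
    rw [mul_assoc, ← Complex.ofReal_mul, Complex.norm_exp_I_mul_ofReal]
  have hft_sub : ∀ ζ, ft (φε - φ) ζ = ft φε ζ - ft φ ζ := by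
    intro ζ
    have hi : ∀ {g : ℝ → ℝ}, Integrable g →
        Integrable (fun x : ℝ => (g x : ℂ) * Complex.exp (-(Complex.I * x * ζ))) := by
      intro g hg
      refine hg.ofReal.mul_bdd (c := 1) (Continuous.aestronglyMeasurable (by fun_prop))
        (Filter.Eventually.of_forall fun x => ?_)
      rw [mul_assoc, ← Complex.ofReal_mul, ← mul_neg, ← Complex.ofReal_neg,
        Complex.norm_exp_I_mul_ofReal]
    simp only [ft, Pi.sub_apply, Complex.ofReal_sub, sub_mul]
    rw [integral_sub (hi hφε1) (hi hφ1), mul_sub]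
  set A : Set ℝ := {ζ : ℝ | |ζ| < R} with hA
  have hAIoo : A = Set.Ioo (-R) R := by
    ext x; simp [hA, abs_lt]
  have hAm : MeasurableSet A := by rw [hAIoo]; exact measurableSet_Ioo
  have hAvol : volume A = ENNReal.ofReal (2 * R) := by
    rw [hAIoo, Real.volume_Ioo]; congr 1; ring
  have : IsFiniteMeasure (volume.restrict A) := ⟨by
    rw [Measure.restrict_apply_univ, hAvol]; exact ENNReal.ofReal_lt_top⟩
  -- low frequency bound
  have hlow : ∫ ζ in A, ‖ft (φε - φ) ζ‖ ≤ Real.sqrt 2 * q⁻¹ * N := by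
    have h := aux_cs (μ := volume.restrict A) (g := fun _ => (1 : ℂ))
      (hd2.restrict A) (memLp_const 1)
    simp only [norm_one, mul_one, one_pow, integral_const, smul_eq_mul] at h
    have hv : (volume.restrict A).real Set.univ = 2 * R := by
      rw [Measure.real, Measure.restrict_apply_univ, hAvol, ENNReal.toReal_ofReal (by linarith)]
    rw [hv] at h
    have h2 : Real.sqrt (2 * R) = Real.sqrt 2 * q⁻¹ := by
      rw [Real.sqrt_mul (by norm_num), hRq, Real.sqrt_sq (inv_pos.2 hq).le]
    rw [h2] at h
    have h3 : Real.sqrt (∫ ζ in A, ‖ft (φε - φ) ζ‖ ^ 2) ≤ N := by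
      rw [hN]
      apply Real.sqrt_le_sqrt
      have := hdP
      simp only [Pi.sub_apply] at this
      rw [← this]
      exact setIntegral_le_integral
        ((memLp_two_iff_integrable_sq_norm hd2.1).1 hd2)
        (Filter.Eventually.of_forall fun ζ => by positivity)
    calc _ ≤ _ := h
      _ ≤ N * (Real.sqrt 2 * q⁻¹) := by gcongr
      _ = _ := by ring
  -- high frequency bound
  have hhigh : ∫ ζ in Aᶜ, ‖ft φ ζ‖ ≤ Real.sqrt (2 / 3) * M * q ^ 3 := by
    have h := aux_cs (μ := volume.restrict Aᶜ) (hE.restrict Aᶜ) (hhat.restrict Aᶜ)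
    simp only [← norm_mul, hprod, hEsq] at h
    rw [(aux_tail hR0).2] at h
    have h3 : Real.sqrt (∫ ζ in Aᶜ, ‖((Real.exp |ζ| : ℝ) : ℂ) * ft φ ζ‖ ^ 2) ≤ M := by
      apply Real.sqrt_le_sqrt
      exact setIntegral_le_integral
        ((memLp_two_iff_integrable_sq_norm hhat.1).1 hhat)
        (Filter.Eventually.of_forall fun ζ => by positivity)
    have h4 : Real.sqrt (Real.exp (-(2 * R))) ≤ Real.sqrt (2 / 3) * q ^ 3 := by
      calc _ ≤ Real.sqrt (2 / 3 * (R ^ 3)⁻¹) := Real.sqrt_le_sqrt (aux_exp hR1)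
        _ = _ := by
          have : (R ^ 3)⁻¹ = (q ^ 3) ^ 2 := by
            rw [hRq]; simp only [inv_pow, inv_inv]; ring
          rw [this, Real.sqrt_mul (by norm_num), Real.sqrt_sq (by positivity)]
    calc _ ≤ _ := h
      _ ≤ (Real.sqrt (2 / 3) * q ^ 3) * M := by gcongr
      _ = _ := by ring
  have hmulchar : ∀ {u : ℝ → ℂ} {μ : Measure ℝ} (x : ℝ), Integrable u μ →
      Integrable (fun ζ : ℝ => u ζ * Complex.exp (Complex.I * ζ * x)) μ := by
    intro u μ x hu
    exact hu.mul_bdd (c := 1) (Continuous.aestronglyMeasurable (by fun_prop))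
      (Filter.Eventually.of_forall fun ζ => (hchar x ζ).le)
  filter_upwards [aux_ft_inversion hφ1 hφ2 hF] with x hx
  have hφεA : Integrable (ft φε) (volume.restrict A) :=
    (hφε2'.restrict A).integrable (by norm_num)
  have hkey : truncRecon φε ε x - (φ x : ℂ) = ((1 / Real.sqrt (2 * Real.pi) : ℝ) : ℂ) *
      ((∫ ζ in A, ft (φε - φ) ζ * Complex.exp (Complex.I * ζ * x)) -
        ∫ ζ in Aᶜ, ft φ ζ * Complex.exp (Complex.I * ζ * x)) := by
    rw [hx, truncRecon, ← hRdef, ← hA,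
      ← integral_add_compl hAm (hmulchar x hF), ← mul_sub]
    simp only [hft_sub, sub_mul]
    rw [integral_sub (hmulchar x hφεA) (hmulchar x hF.restrict)]
    ring
  rw [hkey, norm_mul, Complex.norm_real, Real.norm_of_nonneg hs0.le]
  apply mul_le_mul_of_nonneg_left _ hs0.le
  have hn : ∀ (B : Set ℝ) (u : ℝ → ℂ),
      ‖∫ ζ in B, u ζ * Complex.exp (Complex.I * ζ * x)‖ ≤ ∫ ζ in B, ‖u ζ‖ := by
    intro B u
    refine (norm_integral_le_integral_norm _).trans_eq ?_
    simp only [norm_mul, hchar, mul_one]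
  calc _ ≤ _ := norm_sub_le _ _
    _ ≤ _ := add_le_add ((hn A _).trans hlow) ((hn Aᶜ _).trans hhigh)
end

section
/- Let 0 < ε < 1 and let φ, φ_ε ∈ L²(ℝ) satisfy ‖φ_ε − φ‖_{L²(ℝ)} < ε. Assume ζ ↦ e^{|ζ|} φ̂(ζ) belongs to L²(ℝ). Define φ̃_ε(x) = (1/√(2π)) ∫_{|ζ| < ε^{-1/2}} φ̂_ε(ζ) e^{i ζ x} dζ. Then ‖φ̃_ε − φ‖_{L²(ℝ)} < ε · √(1 + ‖e^{|ζ|} φ̂(ζ)‖²_{L²(ℝ)}). -/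
open MeasureTheory

open scoped FourierTransform SchwartzMap ContDiff

theorem aux_cont {f : ℝ → ℂ} (h1 : Integrable f) : Continuous (𝓕 f) :=
  VectorFourier.fourierIntegral_continuous Real.continuous_fourierChar
    (innerSL ℝ).continuous₂ h1

theorem aux_pair {f g : ℝ → ℂ} (h1 : Integrable f) (hg : Integrable g) :
    ∫ x, g x • 𝓕 f x = ∫ x, 𝓕 g x • f x := by
  have := VectorFourier.integral_fourierIntegral_smul_eq_flip (L := innerₗ ℝ) (μ := volume)
    (ν := volume) Real.continuous_fourierChar continuous_inner hg h1
  simp only [flip_innerₗ] at this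
  exact this.symm

theorem aux_pair_inv {f g : ℝ → ℂ} (h1 : Integrable f) (hg : Integrable g) :
    ∫ x, g x • 𝓕⁻ f x = ∫ x, 𝓕⁻ g x • f x := by
  rw [Real.fourierInv_eq_fourier_comp_neg g, ← aux_pair h1 hg.comp_neg,
    ← integral_neg_eq_self]
  simp [Real.fourierInv_eq_fourier_neg]

theorem aux_ae {f : ℝ → ℂ} (h1 : Integrable f) (h2 : MemLp f 2 (volume : Measure ℝ)) :
    ((𝓕 (h2.toLp f) : Lp ℂ 2 (volume : Measure ℝ)) : ℝ → ℂ) =ᵐ[volume] 𝓕 f := by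
  apply ae_eq_of_integral_contDiff_smul_eq
  · exact (Lp.memLp _).locallyIntegrable (by norm_num)
  · exact (aux_cont h1).locallyIntegrable
  · intro g g_smooth g_cpt
    have hg₁ : HasCompactSupport (Complex.ofRealCLM ∘ g) := g_cpt.comp_left rfl
    have hg₂ : ContDiff ℝ ∞ (Complex.ofRealCLM ∘ g) := by fun_prop
    set G : 𝓢(ℝ, ℂ) := hg₁.toSchwartzMap hg₂ with hG
    have hGg : ∀ x, G x = (g x : ℂ) := fun x => rfl
    have e := congrArg (fun T => T G) (Lp.fourier_toTemperedDistribution_eq (h2.toLp f))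
    simp only [TemperedDistribution.fourier_apply, Lp.toTemperedDistribution_apply] at e
    have e2 : ∫ x, (𝓕 G) x • (h2.toLp f) x = ∫ x, 𝓕 (G : ℝ → ℂ) x • f x := by
      apply integral_congr_ae
      filter_upwards [h2.coeFn_toLp] with x hx
      rw [hx, SchwartzMap.fourier_coe]
    rw [e2, ← aux_pair h1 G.integrable] at e
    simpa [hGg] using e.symm

theorem aux_ae_inv {f : ℝ → ℂ} (h1 : Integrable f) (h2 : MemLp f 2 (volume : Measure ℝ)) :
    ((𝓕⁻ (h2.toLp f) : Lp ℂ 2 (volume : Measure ℝ)) : ℝ → ℂ) =ᵐ[volume] 𝓕⁻ f := by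
  apply ae_eq_of_integral_contDiff_smul_eq
  · exact (Lp.memLp _).locallyIntegrable (by norm_num)
  · rw [Real.fourierInv_eq_fourier_comp_neg]
    exact (aux_cont h1.comp_neg).locallyIntegrable
  · intro g g_smooth g_cpt
    have hg₁ : HasCompactSupport (Complex.ofRealCLM ∘ g) := g_cpt.comp_left rfl
    have hg₂ : ContDiff ℝ ∞ (Complex.ofRealCLM ∘ g) := by fun_prop
    set G : 𝓢(ℝ, ℂ) := hg₁.toSchwartzMap hg₂ with hG
    have hGg : ∀ x, G x = (g x : ℂ) := fun x => rfl
    have e := congrArg (fun T => T G) (Lp.fourierInv_toTemperedDistribution_eq (h2.toLp f))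
    simp only [TemperedDistribution.fourierInv_apply, Lp.toTemperedDistribution_apply] at e
    have e2 : ∫ x, (𝓕⁻ G) x • (h2.toLp f) x = ∫ x, 𝓕⁻ (G : ℝ → ℂ) x • f x := by
      apply integral_congr_ae
      filter_upwards [h2.coeFn_toLp] with x hx
      rw [hx, SchwartzMap.fourierInv_coe]
    rw [e2, ← aux_pair_inv h1 G.integrable] at e
    simpa [hGg] using e.symm

theorem aux_normsq (F : Lp ℂ 2 (volume : Measure ℝ)) {f : ℝ → ℂ}
    (h : (F : ℝ → ℂ) =ᵐ[volume] f) : ∫ x, ‖f x‖ ^ 2 = ‖F‖ ^ 2 := by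
  have e : (∫ x, ‖f x‖ ^ 2) = ∫ x, ‖F x‖ ^ 2 := by
    apply integral_congr_ae
    filter_upwards [h] with x hx
    rw [hx]
  rw [e]
  have := @L2.inner_def ℝ ℂ ℂ _ _ _ _ _ F F
  have h3 : inner ℂ F F = ((‖F‖ ^ 2 : ℝ) : ℂ) := by
    rw [inner_self_eq_norm_sq_to_K]; norm_cast
  rw [h3] at this
  have h4 : ∫ x, inner ℂ (F x) (F x) = ((∫ x, ‖F x‖ ^ 2 : ℝ) : ℂ) := by
    rw [← integral_complex_ofReal]
    congr 1; ext x
    rw [inner_self_eq_norm_sq_to_K]; norm_cast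
  rw [h4] at this
  exact_mod_cast this.symm

theorem plancherel {f : ℝ → ℂ} (h1 : Integrable f) (h2 : MemLp f 2 (volume : Measure ℝ)) :
    MemLp (𝓕 f) 2 (volume : Measure ℝ) ∧ ∫ x, ‖𝓕 f x‖ ^ 2 = ∫ x, ‖f x‖ ^ 2 := by
  refine ⟨(memLp_congr_ae (aux_ae h1 h2)).1 (Lp.memLp _), ?_⟩
  rw [aux_normsq _ (aux_ae h1 h2), aux_normsq _ h2.coeFn_toLp, Lp.norm_fourier_eq]

theorem plancherel_diff {f g : ℝ → ℂ} (h1 : Integrable f) (h2 : MemLp f 2 (volume : Measure ℝ))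
    (g1 : Integrable g) (g2 : MemLp g 2 (volume : Measure ℝ)) :
    ∫ x, ‖𝓕⁻ g x - f x‖ ^ 2 = ∫ x, ‖g x - 𝓕 f x‖ ^ 2 := by
  have a : ((𝓕⁻ (g2.toLp g) - h2.toLp f : Lp ℂ 2 (volume : Measure ℝ)) : ℝ → ℂ)
      =ᵐ[volume] fun x => 𝓕⁻ g x - f x := by
    filter_upwards [Lp.coeFn_sub (𝓕⁻ (g2.toLp g)) (h2.toLp f), aux_ae_inv g1 g2,
      h2.coeFn_toLp] with x hx hy hz
    rw [hx, Pi.sub_apply, hy, hz]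
  have b : ((g2.toLp g - 𝓕 (h2.toLp f) : Lp ℂ 2 (volume : Measure ℝ)) : ℝ → ℂ)
      =ᵐ[volume] fun x => g x - 𝓕 f x := by
    filter_upwards [Lp.coeFn_sub (g2.toLp g) (𝓕 (h2.toLp f)), aux_ae h1 h2,
      g2.coeFn_toLp] with x hx hy hz
    rw [hx, Pi.sub_apply, hy, hz]
  have c : 𝓕 (𝓕⁻ (g2.toLp g) - h2.toLp f : Lp ℂ 2 (volume : Measure ℝ))
      = g2.toLp g - 𝓕 (h2.toLp f) := by
    have h := (Lp.fourierTransformₗᵢ ℝ ℂ).map_sub (𝓕⁻ (g2.toLp g)) (h2.toLp f)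
    have h' : Lp.fourierTransformₗᵢ ℝ ℂ (𝓕⁻ (g2.toLp g)) = g2.toLp g :=
      (Lp.fourierTransformₗᵢ ℝ ℂ).apply_symm_apply _
    rw [h'] at h
    exact h
  rw [aux_normsq _ a, aux_normsq _ b, ← Lp.norm_fourier_eq, c]

theorem ft_eq (g : ℝ → ℝ) (ζ : ℝ) : ft g ζ =
    ((1 / Real.sqrt (2 * Real.pi) : ℝ) : ℂ) * 𝓕 (fun x => (g x : ℂ)) (ζ / (2 * Real.pi)) := by
  have hpi : (Real.pi : ℂ) ≠ 0 := by exact_mod_cast Real.pi_ne_zero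
  rw [ft, Real.fourier_real_eq_integral_exp_smul]
  congr 2
  ext x
  rw [smul_eq_mul, mul_comm]
  congr 2
  push_cast
  field_simp

theorem trunc_eq (φε : ℝ → ℝ) (ε x : ℝ) : truncRecon φε ε x =
    𝓕⁻ (Set.indicator {ξ : ℝ | |2 * Real.pi * ξ| < (Real.sqrt ε)⁻¹}
      (𝓕 (fun x => (φε x : ℂ)))) x := by
  have hpi : (Real.pi : ℂ) ≠ 0 := by exact_mod_cast Real.pi_ne_zero
  have hpi0 := Real.pi_pos
  have hm : MeasurableSet {ζ : ℝ | |ζ| < (Real.sqrt ε)⁻¹} :=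
    measurableSet_lt (by fun_prop) (by fun_prop)
  rw [truncRecon, Real.fourierInv_eq', ← integral_indicator hm]
  have key := Measure.integral_comp_div (fun ξ : ℝ => Complex.exp ((↑(2 * Real.pi * inner ℝ ξ x) *
      Complex.I)) • Set.indicator {ξ : ℝ | |2 * Real.pi * ξ| < (Real.sqrt ε)⁻¹}
      (𝓕 (fun x => (φε x : ℂ))) ξ) (2 * Real.pi)
  have hc : ((1 / Real.sqrt (2 * Real.pi) : ℝ) : ℂ) * ((1 / Real.sqrt (2 * Real.pi) : ℝ) : ℂ)
      = (((2 * Real.pi)⁻¹ : ℝ) : ℂ) := by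
    rw [← Complex.ofReal_mul]
    congr 1
    rw [div_mul_div_comm, Real.mul_self_sqrt (by positivity)]
    simp
  have e : ∀ ζ : ℝ, Set.indicator {ζ : ℝ | |ζ| < (Real.sqrt ε)⁻¹}
      (fun ζ : ℝ => ft φε ζ * Complex.exp (Complex.I * ζ * x)) ζ =
      ((1 / Real.sqrt (2 * Real.pi) : ℝ) : ℂ) *
      (fun ξ : ℝ => Complex.exp ((↑(2 * Real.pi * inner ℝ ξ x) *
      Complex.I)) • Set.indicator {ξ : ℝ | |2 * Real.pi * ξ| < (Real.sqrt ε)⁻¹}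
      (𝓕 (fun x => (φε x : ℂ))) ξ) (ζ / (2 * Real.pi)) := by
    intro ζ
    have h2 : 2 * Real.pi * (ζ / (2 * Real.pi)) = ζ := by field_simp
    simp only [Set.indicator_apply, Set.mem_setOf_eq, h2]
    split_ifs
    · rw [ft_eq, smul_eq_mul, mul_assoc]
      congr 1
      rw [mul_comm]
      congr 2
      simp
      field_simp
    · simp
  simp_rw [e]
  rw [integral_const_mul, key, ← mul_assoc, hc, abs_of_pos (by positivity), Complex.real_smul,
    ← mul_assoc, ← Complex.ofReal_mul, inv_mul_cancel₀ (by positivity)]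
  simp

theorem sq_le_exp_aux {R : ℝ} (hR : 0 ≤ R) : R ^ 2 ≤ Real.exp R := by
  have h := Real.add_one_le_exp (R / 2)
  have h2 : Real.exp R = Real.exp (R / 2) * Real.exp (R / 2) := by
    rw [← Real.exp_add]; congr 1; ring
  have h3 := Real.quadratic_le_exp_of_nonneg (x := R / 2) (by positivity)
  have h4 : R ≤ Real.exp (R / 2) := by nlinarith [sq_nonneg (R / 2 - 1)]
  rw [h2]; nlinarith




/-- if `‖φ_ε - φ‖_{L²} < ε` and `e^{|ζ|} φ̂ ∈ L²(ℝ)`, then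
`‖φ̃_ε - φ‖_{L²} < ε √(1 + ‖e^{|ζ|} φ̂‖²_{L²})`. -/
theorem trunc_recon_L2_estimate (ε : ℝ) (hε0 : 0 < ε) (hε1 : ε < 1)
    (φ φε : ℝ → ℝ)
    (hφ1 : Integrable φ) (hφ2 : MemLp φ 2 (volume : Measure ℝ))
    (hφε1 : Integrable φε) (hφε2 : MemLp φε 2 (volume : Measure ℝ))
    (hnear : Real.sqrt (∫ x : ℝ, (φε x - φ x) ^ 2) < ε)
    (hhat : MemLp (fun ζ : ℝ => ((Real.exp |ζ| : ℝ) : ℂ) * ft φ ζ) 2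
      (volume : Measure ℝ)) :
    Real.sqrt (∫ x : ℝ, ‖truncRecon φε ε x - (φ x : ℂ)‖ ^ 2) <
      ε * Real.sqrt (1 + ∫ ζ : ℝ, ‖((Real.exp |ζ| : ℝ) : ℂ) * ft φ ζ‖ ^ 2) := by
  have hpi0 := Real.pi_pos
  set f : ℝ → ℂ := fun x => (φ x : ℂ) with hf
  set fe : ℝ → ℂ := fun x => (φε x : ℂ) with hfe
  have f1 : Integrable f := hφ1.ofReal
  have f2 : MemLp f 2 (volume : Measure ℝ) := hφ2.ofReal
  have fe1 : Integrable fe := hφε1.ofReal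
  have fe2 : MemLp fe 2 (volume : Measure ℝ) := hφε2.ofReal
  set R : ℝ := (Real.sqrt ε)⁻¹ with hR
  set S : Set ℝ := {ξ : ℝ | |2 * Real.pi * ξ| < R} with hS
  have hSm : MeasurableSet S := measurableSet_lt (by fun_prop) (by fun_prop)
  have hSfin : volume S ≠ ⊤ := by
    apply ne_top_of_le_ne_top (measure_Icc_lt_top (a := -R) (b := R) (μ := volume)).ne
    apply measure_mono
    intro ξ hξ
    have h1 : |2 * Real.pi * ξ| < R := hξ
    rw [abs_mul, abs_of_pos (by positivity : 0 < 2 * Real.pi)] at h1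
    have : |ξ| ≤ R := by nlinarith [abs_nonneg ξ, Real.pi_gt_three]
    exact abs_le.1 this
  set G : ℝ → ℂ := S.indicator (𝓕 fe) with hG
  obtain ⟨Ffe2, -⟩ := plancherel fe1 fe2
  obtain ⟨Fd2, Fdn⟩ := plancherel (fe1.sub f1) (fe2.sub f2)
  have G2 : MemLp G 2 (volume : Measure ℝ) := Ffe2.indicator hSm
  have G1 : Integrable G := by
    rw [hG, integrable_indicator_iff hSm]
    have : IsFiniteMeasure (volume.restrict S) := ⟨by simpa using hSfin.lt_top⟩
    exact (Ffe2.restrict S).integrable (by norm_num)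
  have hsub : ∀ ξ, 𝓕 (fe - f) ξ = 𝓕 fe ξ - 𝓕 f ξ := by
    intro ξ
    have hi : ∀ h : ℝ → ℂ, Integrable h → Integrable
        (fun v : ℝ => Complex.exp (↑(-2 * Real.pi * v * ξ) * Complex.I) • h v) := by
      intro h hh
      apply hh.bdd_mul (c := 1)
      · exact Continuous.aestronglyMeasurable (by fun_prop)
      · filter_upwards with v
        rw [Complex.norm_exp_ofReal_mul_I]
    simp only [Real.fourier_real_eq_integral_exp_smul, Pi.sub_apply, smul_sub]
    exact integral_sub (hi _ fe1) (hi _ f1)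
  set H : ℝ → ℝ := fun ξ => (Real.exp |2 * Real.pi * ξ| * ‖𝓕 f ξ‖) ^ 2 with hH
  have hHe : ∀ ζ : ℝ, ‖((Real.exp |ζ| : ℝ) : ℂ) * ft φ ζ‖ ^ 2
      = (2 * Real.pi)⁻¹ * H (ζ / (2 * Real.pi)) := by
    intro ζ
    have h2 : 2 * Real.pi * (ζ / (2 * Real.pi)) = ζ := by field_simp
    rw [ft_eq, hH]
    simp only [h2, norm_mul, Complex.norm_real, Real.norm_eq_abs, Real.abs_exp]
    rw [abs_of_pos (by positivity : 0 < 1 / Real.sqrt (2 * Real.pi))]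
    rw [mul_pow, mul_pow, mul_pow, div_pow, Real.sq_sqrt (by positivity)]
    ring
  have hHN : ∫ ζ : ℝ, ‖((Real.exp |ζ| : ℝ) : ℂ) * ft φ ζ‖ ^ 2 = ∫ ξ, H ξ := by
    simp_rw [hHe]
    rw [integral_const_mul, Measure.integral_comp_div, abs_of_pos (by positivity), smul_eq_mul,
      ← mul_assoc, inv_mul_cancel₀ (by positivity), one_mul]
  have hHi : Integrable H := by
    have h := (memLp_two_iff_integrable_sq_norm hhat.1).1 hhat
    simp_rw [hHe] at h
    have h' := (h.const_mul (2 * Real.pi)).comp_mul_right' (R := 2 * Real.pi) (by positivity)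
    refine h'.congr ?_
    filter_upwards with ξ
    rw [← mul_assoc, mul_inv_cancel₀ (by positivity), one_mul, mul_div_cancel_right₀ _ (by positivity)]
  have hdi : Integrable (fun ξ => ‖𝓕 (fe - f) ξ‖ ^ 2) :=
    (memLp_two_iff_integrable_sq_norm Fd2.1).1 Fd2
  have hA : ∫ ξ, ‖𝓕 (fe - f) ξ‖ ^ 2 = ∫ x : ℝ, (φε x - φ x) ^ 2 := by
    rw [Fdn]
    congr 1; ext x
    simp only [Pi.sub_apply, hf, hfe]
    rw [← Complex.ofReal_sub, Complex.norm_real, Real.norm_eq_abs, sq_abs]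
  have hL : ∫ x : ℝ, ‖truncRecon φε ε x - (φ x : ℂ)‖ ^ 2 = ∫ ξ, ‖G ξ - 𝓕 f ξ‖ ^ 2 := by
    rw [← plancherel_diff f1 f2 G1 G2]
    simp_rw [trunc_eq]
    rfl
  have hR2 : 1 ≤ ε * Real.exp R := by
    have hR0 : 0 ≤ R := by positivity
    have h1 := sq_le_exp_aux hR0
    have h2 : ε * R ^ 2 = 1 := by
      rw [hR, inv_pow, Real.sq_sqrt hε0.le, mul_inv_cancel₀ hε0.ne']
    nlinarith
  have hpt : ∀ ξ, ‖G ξ - 𝓕 f ξ‖ ^ 2 ≤ ‖𝓕 (fe - f) ξ‖ ^ 2 + ε ^ 2 * H ξ := by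
    intro ξ
    have hH0 : 0 ≤ ε ^ 2 * H ξ := by positivity
    by_cases hξ : ξ ∈ S
    · rw [hG, Set.indicator_of_mem hξ, hsub]
      linarith
    · rw [hG, Set.indicator_of_notMem hξ, zero_sub, norm_neg]
      have h1 : R ≤ |2 * Real.pi * ξ| := not_lt.1 hξ
      have h2 : 1 ≤ ε * Real.exp |2 * Real.pi * ξ| :=
        hR2.trans (mul_le_mul_of_nonneg_left (Real.exp_le_exp.2 h1) hε0.le)
      have h3 : ‖𝓕 f ξ‖ ≤ ε * (Real.exp |2 * Real.pi * ξ| * ‖𝓕 f ξ‖) := by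
        nlinarith [norm_nonneg (𝓕 f ξ)]
      have h4 : ‖𝓕 f ξ‖ ^ 2 ≤ ε ^ 2 * H ξ := by
        rw [hH, ← mul_pow]
        exact pow_le_pow_left₀ (norm_nonneg _) h3 2
      have h5 : 0 ≤ ‖𝓕 (fe - f) ξ‖ ^ 2 := by positivity
      linarith
  have hmain : ∫ ξ, ‖G ξ - 𝓕 f ξ‖ ^ 2 ≤ (∫ x : ℝ, (φε x - φ x) ^ 2) + ε ^ 2 * ∫ ξ, H ξ := by
    rw [← hA, ← integral_const_mul, ← integral_add hdi (hHi.const_mul _)]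
    apply integral_mono_of_nonneg
    · filter_upwards with ξ
      positivity
    · exact hdi.add (hHi.const_mul _)
    · filter_upwards with ξ
      exact hpt ξ
  have hA2 : (∫ x : ℝ, (φε x - φ x) ^ 2) < ε ^ 2 := (Real.sqrt_lt' hε0).1 hnear
  have hH0 : 0 ≤ ∫ ξ, H ξ := integral_nonneg fun ξ => by positivity
  rw [hL, hHN, Real.sqrt_lt' (by positivity), mul_pow, Real.sq_sqrt (by positivity)]
  linarith
end

section
/- Let 0 < ε < e^{-3}, let C₃ > 0, and let χ, φ̂ ∈ L²(ℝ) with ‖χ − φ̂‖_{L²(ℝ)} < C₃ ε. Assume ζ ↦ ζ φ̂(ζ) e^{|ζ|} belongs to L²(ℝ). Define χ_log(ζ) = χ(ζ) for |ζ| < (1/6) ln(1/ε) and χ_log(ζ) = 0 otherwise. Then ‖(χ_log(ζ) − φ̂(ζ)) e^{|ζ|}‖²_{L²(ℝ)} < (C₃² + 36 ‖ζ φ̂(ζ) e^{|ζ|}‖²_{L²(ℝ)}) · (ln(1/ε))^{-2}. -/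
open MeasureTheory

/-- if `0 < ε < e^{-3}`, `‖χ - φ̂‖_{L²} < C₃ ε` and `ζ φ̂(ζ) e^{|ζ|} ∈ L²(ℝ)`,
then the truncation `χ_log` of `χ` at frequency `(1/6) ln(1/ε)` satisfies
`‖(χ_log - φ̂) e^{|ζ|}‖²_{L²} < (C₃² + 36 ‖ζ φ̂(ζ) e^{|ζ|}‖²_{L²}) (ln(1/ε))^{-2}`. -/
theorem log_truncation_estimate (ε : ℝ) (hε0 : 0 < ε) (hε1 : ε < Real.exp (-3))
    (C₃ : ℝ) (hC₃ : 0 < C₃) (χ φhat : ℝ → ℂ)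
    (hχ : MemLp χ 2 (volume : Measure ℝ)) (hφhat : MemLp φhat 2 (volume : Measure ℝ))
    (hnear : Real.sqrt (∫ ζ : ℝ, ‖χ ζ - φhat ζ‖ ^ 2) < C₃ * ε)
    (hw : MemLp (fun ζ : ℝ => (ζ : ℂ) * φhat ζ * ((Real.exp |ζ| : ℝ) : ℂ)) 2
      (volume : Measure ℝ)) :
    (∫ ζ : ℝ,
        ‖((if |ζ| < (1 / 6) * Real.log (1 / ε) then χ ζ else 0) - φhat ζ) *
            ((Real.exp |ζ| : ℝ) : ℂ)‖ ^ 2) <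
      (C₃ ^ 2 + 36 * ∫ ζ : ℝ, ‖(ζ : ℂ) * φhat ζ * ((Real.exp |ζ| : ℝ) : ℂ)‖ ^ 2) *
        ((Real.log (1 / ε)) ^ 2)⁻¹ := by
  set L := Real.log (1 / ε) with hL
  have hLε : ε = Real.exp (-L) := by
    rw [hL, one_div, Real.log_inv, neg_neg, Real.exp_log hε0]
  have hL3 : 3 < L := by
    rw [hLε, Real.exp_lt_exp] at hε1
    linarith
  have hLpos : 0 < L := by linarith
  have hI1 : Integrable (fun ζ : ℝ => ‖χ ζ - φhat ζ‖ ^ 2) := by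
    have h := (hχ.sub hφhat).integrable_norm_pow (by norm_num)
    simpa using h
  have hI2 : Integrable
      (fun ζ : ℝ => ‖(ζ : ℂ) * φhat ζ * ((Real.exp |ζ| : ℝ) : ℂ)‖ ^ 2) := by
    have h := hw.integrable_norm_pow (by norm_num)
    simpa using h
  have hA : (∫ ζ : ℝ, ‖χ ζ - φhat ζ‖ ^ 2) < (C₃ * ε) ^ 2 :=
    (Real.sqrt_lt' (by positivity)).1 hnear
  have hpt : ∀ ζ : ℝ,
      ‖((if |ζ| < (1 / 6) * L then χ ζ else 0) - φhat ζ) *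
            ((Real.exp |ζ| : ℝ) : ℂ)‖ ^ 2 ≤
      Real.exp (L / 3) * ‖χ ζ - φhat ζ‖ ^ 2 +
        36 * (L ^ 2)⁻¹ * ‖(ζ : ℂ) * φhat ζ * ((Real.exp |ζ| : ℝ) : ℂ)‖ ^ 2 := by
    intro ζ
    have hn : ‖((Real.exp |ζ| : ℝ) : ℂ)‖ = Real.exp |ζ| := by
      rw [Complex.norm_real, Real.norm_eq_abs, abs_of_pos (Real.exp_pos _)]
    split_ifs with h
    · have h1 : Real.exp |ζ| ^ 2 ≤ Real.exp (L / 3) := by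
        rw [← Real.exp_nat_mul, Real.exp_le_exp]
        push_cast
        linarith
      have h2 : 0 ≤ 36 * (L ^ 2)⁻¹ *
          ‖(ζ : ℂ) * φhat ζ * ((Real.exp |ζ| : ℝ) : ℂ)‖ ^ 2 := by positivity
      have h3 := mul_le_mul_of_nonneg_right h1 (sq_nonneg ‖χ ζ - φhat ζ‖)
      rw [norm_mul, hn, mul_pow]
      linarith
    · have h0 : 0 ≤ Real.exp (L / 3) * ‖χ ζ - φhat ζ‖ ^ 2 := by positivity
      have h1 : 1 ≤ 36 * (L ^ 2)⁻¹ * |ζ| ^ 2 := by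
        have h4 : L ^ 2 ≤ 36 * |ζ| ^ 2 := by nlinarith
        have h5 : 36 * (L ^ 2)⁻¹ * |ζ| ^ 2 = (36 * |ζ| ^ 2) / L ^ 2 := by ring
        rw [h5, le_div_iff₀ (by positivity)]
        linarith
      rw [zero_sub, norm_mul, norm_neg, norm_mul, norm_mul, hn, Complex.norm_real,
        Real.norm_eq_abs]
      have h3 := mul_le_mul_of_nonneg_right h1
        (sq_nonneg (‖φhat ζ‖ * Real.exp |ζ|))
      calc (‖φhat ζ‖ * Real.exp |ζ|) ^ 2
          ≤ 36 * (L ^ 2)⁻¹ * |ζ| ^ 2 * (‖φhat ζ‖ * Real.exp |ζ|) ^ 2 := by linarith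
        _ = 36 * (L ^ 2)⁻¹ * (|ζ| * ‖φhat ζ‖ * Real.exp |ζ|) ^ 2 := by ring
        _ ≤ _ := by linarith
  have hint := integral_mono_of_nonneg (μ := (volume : Measure ℝ))
    (Filter.Eventually.of_forall (fun ζ => by positivity))
    ((hI1.const_mul (Real.exp (L / 3))).add (hI2.const_mul (36 * (L ^ 2)⁻¹)))
    (Filter.Eventually.of_forall hpt)
  simp only [Pi.add_apply] at hint
  rw [integral_add (hI1.const_mul _) (hI2.const_mul _), integral_const_mul,
    integral_const_mul] at hint
  have hexp : Real.exp (L / 3) * ε ^ 2 ≤ (L ^ 2)⁻¹ := by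
    have e1 : Real.exp (L / 3) * ε ^ 2 = (Real.exp (5 * L / 6) ^ 2)⁻¹ := by
      rw [hLε, ← Real.exp_nat_mul, ← Real.exp_nat_mul, ← Real.exp_add, ← Real.exp_neg]
      congr 1
      push_cast
      ring
    have e2 : L ≤ Real.exp (5 * L / 6) := by
      have := Real.quadratic_le_exp_of_nonneg (x := 5 * L / 6) (by positivity)
      nlinarith
    rw [e1]
    gcongr
  have h6 := mul_lt_mul_of_pos_left hA (Real.exp_pos (L / 3))
  have h7 := mul_le_mul_of_nonneg_left hexp (sq_nonneg C₃)
  refine lt_of_le_of_lt hint ?_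
  rw [add_mul]
  have h8 : Real.exp (L / 3) * (C₃ * ε) ^ 2 = C₃ ^ 2 * (Real.exp (L / 3) * ε ^ 2) := by ring
  linarith
end

section
/- Let a, b, a', b' : ℝ → ℂ be measurable with (a − a') e^{|ζ|} and (b − b') e^{|ζ|} in L²(ℝ). For ζ ≠ 0 and 0 ≤ y ≤ 1 define ℵ[a,b](ζ, y) = (1/2) a(ζ) [e^{(1−y)|ζ|} + e^{(y−1)|ζ|}] − (1/(2|ζ|)) b(ζ) [e^{(1−y)|ζ|} − e^{(y−1)|ζ|}]. Then ‖ℵ[a,b] − ℵ[a',b']‖_{L²(ℝ × (0,1))} ≤ ‖(a − a') e^{|ζ|}‖_{L²(ℝ)} + ‖(b − b') e^{|ζ|}‖_{L²(ℝ)}. -/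
open MeasureTheory

/-- The Fourier-side solution formula of the Cauchy problem for the Laplace equation on
`ℝ × (0,1)`: `ℵ[a,b](ζ,y) = (1/2) a(ζ) [e^{(1-y)|ζ|} + e^{(y-1)|ζ|}]
 - (1/(2|ζ|)) b(ζ) [e^{(1-y)|ζ|} - e^{(y-1)|ζ|}]`. -/
noncomputable def aleph (a b : ℝ → ℂ) (ζ y : ℝ) : ℂ :=
  (1 / 2 : ℂ) * a ζ * ((Real.exp ((1 - y) * |ζ|) + Real.exp ((y - 1) * |ζ|) : ℝ) : ℂ) -
    ((1 / (2 * |ζ|) : ℝ) : ℂ) * b ζ *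
      ((Real.exp ((1 - y) * |ζ|) - Real.exp ((y - 1) * |ζ|) : ℝ) : ℂ)

lemma aleph_kernel_bound (z y : ℝ) (hz : 0 ≤ z) (h0 : 0 < y) (h1 : y < 1) :
    0 ≤ Real.exp ((1 - y) * z) - Real.exp ((y - 1) * z) ∧
    Real.exp ((1 - y) * z) + Real.exp ((y - 1) * z) ≤ 2 * Real.exp z ∧
    1 / (2 * z) * (Real.exp ((1 - y) * z) - Real.exp ((y - 1) * z)) ≤ Real.exp z := by
  have e1 : Real.exp ((1 - y) * z) ≤ Real.exp z := Real.exp_le_exp.2 (by nlinarith)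
  have e2 : Real.exp ((y - 1) * z) ≤ Real.exp ((1 - y) * z) :=
    Real.exp_le_exp.2 (by nlinarith)
  refine ⟨by linarith, by linarith, ?_⟩
  rcases hz.eq_or_lt with rfl | hz'
  · simp
  · have e3 := Real.add_one_le_exp (-(2 * ((1 - y) * z)))
    have e4 : Real.exp ((y - 1) * z)
        = Real.exp ((1 - y) * z) * Real.exp (-(2 * ((1 - y) * z))) := by
      rw [← Real.exp_add]; congr 1; ring
    have e5 := mul_le_mul_of_nonneg_left e3 (Real.exp_pos ((1 - y) * z)).le
    have e6 : (1 - y) * z * Real.exp ((1 - y) * z) ≤ z * Real.exp z :=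
      mul_le_mul (by nlinarith) e1 (Real.exp_pos _).le hz
    rw [one_div, inv_mul_le_iff₀ (by positivity)]
    nlinarith

lemma aleph_pointwise (a b a' b' : ℝ → ℂ) (ζ y : ℝ) (h0 : 0 < y) (h1 : y < 1) :
    ‖aleph a b ζ y - aleph a' b' ζ y‖ ≤
      ‖(a ζ - a' ζ) * ((Real.exp |ζ| : ℝ) : ℂ)‖ +
        ‖(b ζ - b' ζ) * ((Real.exp |ζ| : ℝ) : ℂ)‖ := by
  obtain ⟨k1, k2, k3⟩ := aleph_kernel_bound |ζ| y (abs_nonneg _) h0 h1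
  have : aleph a b ζ y - aleph a' b' ζ y =
      (a ζ - a' ζ) * (((Real.exp ((1 - y) * |ζ|) + Real.exp ((y - 1) * |ζ|)) / 2 : ℝ) : ℂ) -
      (b ζ - b' ζ) * ((1 / (2 * |ζ|) *
        (Real.exp ((1 - y) * |ζ|) - Real.exp ((y - 1) * |ζ|)) : ℝ) : ℂ) := by
    unfold aleph
    push_cast
    ring
  rw [this]
  refine (norm_sub_le _ _).trans ?_
  simp only [norm_mul, Complex.norm_real]
  rw [Real.norm_of_nonneg (by positivity :
      0 ≤ (Real.exp ((1 - y) * |ζ|) + Real.exp ((y - 1) * |ζ|)) / 2),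
    ← norm_mul, Real.norm_of_nonneg (mul_nonneg (by positivity) k1),
    Real.norm_of_nonneg (Real.exp_pos _).le]
  gcongr
  linarith

lemma sqrt_eq_eLpNorm (f : ℝ → ℝ) (hf : MemLp f 2 (volume : Measure ℝ)) :
    Real.sqrt (∫ x, f x ^ 2) = (eLpNorm f 2 volume).toReal := by
  rw [hf.eLpNorm_eq_integral_rpow_norm (by norm_num) (by norm_num),
    ENNReal.toReal_ofReal (by positivity), Real.sqrt_eq_rpow]
  simp

/-- stability of the Fourier-side solution formula:
`‖ℵ[a,b] - ℵ[a',b']‖_{L²(ℝ×(0,1))} ≤ ‖(a-a') e^{|ζ|}‖_{L²} + ‖(b-b') e^{|ζ|}‖_{L²}`. -/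
theorem aleph_stability (a b a' b' : ℝ → ℂ)
    (ha : Measurable a) (hb : Measurable b) (ha' : Measurable a') (hb' : Measurable b')
    (hae : MemLp (fun ζ : ℝ => (a ζ - a' ζ) * ((Real.exp |ζ| : ℝ) : ℂ)) 2
      (volume : Measure ℝ))
    (hbe : MemLp (fun ζ : ℝ => (b ζ - b' ζ) * ((Real.exp |ζ| : ℝ) : ℂ)) 2
      (volume : Measure ℝ)) :
    Real.sqrt (∫ ζ : ℝ, ∫ y in Set.Ioo (0 : ℝ) 1,
        ‖aleph a b ζ y - aleph a' b' ζ y‖ ^ 2) ≤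
      Real.sqrt (∫ ζ : ℝ, ‖(a ζ - a' ζ) * ((Real.exp |ζ| : ℝ) : ℂ)‖ ^ 2) +
        Real.sqrt (∫ ζ : ℝ, ‖(b ζ - b' ζ) * ((Real.exp |ζ| : ℝ) : ℂ)‖ ^ 2) := by
  have hF := hae.norm
  have hG := hbe.norm
  have hFG := hF.add hG
  have key : Real.sqrt (∫ ζ : ℝ, ∫ y in Set.Ioo (0 : ℝ) 1,
        ‖aleph a b ζ y - aleph a' b' ζ y‖ ^ 2) ≤
      Real.sqrt (∫ ζ : ℝ, (‖(a ζ - a' ζ) * ((Real.exp |ζ| : ℝ) : ℂ)‖ +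
        ‖(b ζ - b' ζ) * ((Real.exp |ζ| : ℝ) : ℂ)‖) ^ 2) := by
    apply Real.sqrt_le_sqrt
    apply integral_mono_of_nonneg
    · exact Filter.Eventually.of_forall fun ζ => integral_nonneg fun y => by positivity
    · exact hFG.integrable_sq
    · refine Filter.Eventually.of_forall fun ζ => ?_
      have h : (∫ y in Set.Ioo (0 : ℝ) 1, ‖aleph a b ζ y - aleph a' b' ζ y‖ ^ 2) ≤
          ∫ y in Set.Ioo (0 : ℝ) 1, (‖(a ζ - a' ζ) * ((Real.exp |ζ| : ℝ) : ℂ)‖ +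
            ‖(b ζ - b' ζ) * ((Real.exp |ζ| : ℝ) : ℂ)‖) ^ 2 := by
        apply integral_mono_of_nonneg
        · exact Filter.Eventually.of_forall fun y => by positivity
        · exact integrable_const _
        · refine (ae_restrict_iff' measurableSet_Ioo).2 (Filter.Eventually.of_forall ?_)
          intro y hy
          exact pow_le_pow_left₀ (norm_nonneg _) (aleph_pointwise a b a' b' ζ y hy.1 hy.2) 2
      simpa using h
  refine key.trans ?_
  rw [sqrt_eq_eLpNorm _ hF, sqrt_eq_eLpNorm _ hG]
  refine (sqrt_eq_eLpNorm _ hFG).le.trans ?_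
  rw [← ENNReal.toReal_add hF.eLpNorm_ne_top hG.eLpNorm_ne_top]
  exact ENNReal.toReal_mono (ENNReal.add_ne_top.2 ⟨hF.eLpNorm_ne_top, hG.eLpNorm_ne_top⟩)
    (eLpNorm_add_le hF.1 hG.1 (by norm_num))
end

section
/- Let 0 < ε < e^{-3}. Let φ̂, ψ̂ : ℝ → ℂ satisfy e^{|ζ|} φ̂(ζ), e^{|ζ|} ψ̂(ζ), ζ e^{|ζ|} φ̂(ζ), ζ e^{|ζ|} ψ̂(ζ) ∈ L²(ℝ). Let C₃, C > 0 and let χ_φ, χ_ψ ∈ L²(ℝ) with ‖χ_φ − φ̂‖_{L²(ℝ)} < C₃ ε and ‖χ_ψ − ψ̂‖_{L²(ℝ)} < C ε^{1/2}. Define χ_φ^log(ζ) = χ_φ(ζ)·1_{|ζ| < (1/6)ln(1/ε)} and χ_ψ^log(ζ) = χ_ψ(ζ)·1_{|ζ| < (1/6)ln(1/ε)}, and for ζ ≠ 0, 0 ≤ y ≤ 1 set ℵ[a,b](ζ, y) = (1/2) a(ζ) [e^{(1−y)|ζ|} + e^{(y−1)|ζ|}] − (1/(2|ζ|)) b(ζ)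 [e^{(1−y)|ζ|} − e^{(y−1)|ζ|}]. Then ‖ℵ[χ_φ^log, χ_ψ^log] − ℵ[φ̂, ψ̂]‖_{L²(ℝ × (0,1))} < (C₄ + C₅) (ln(1/ε))^{-1}, where C₄ = √(C₃² + 36 ‖ζ φ̂(ζ) e^{|ζ|}‖²_{L²(ℝ)}) and C₅ = √(C² + 36 ‖ζ ψ̂(ζ) e^{|ζ|}‖²_{L²(ℝ)}). -/
open MeasureTheory

lemma cosh_eps_bound (L : ℝ) (hL : 0 < L) : L * Real.exp (-L / 2) * Real.cosh (L / 6) < 1 := by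
  have h1 : (L / 3) * Real.exp (-(L / 3)) ≤ Real.exp (-1) := Real.mul_exp_neg_le_exp_neg_one _
  have h2 : (2 * L / 3) * Real.exp (-(2 * L / 3)) ≤ Real.exp (-1) :=
    Real.mul_exp_neg_le_exp_neg_one _
  have h3 : Real.exp (-1) < 0.37 := by
    have := Real.exp_neg_one_lt_d9
    norm_num at this ⊢
    linarith
  have e1 : Real.exp (-L / 2) * Real.exp (L / 6) = Real.exp (-(L / 3)) := by
    rw [← Real.exp_add]; congr 1; ring
  have e2 : Real.exp (-L / 2) * Real.exp (-(L / 6)) = Real.exp (-(2 * L / 3)) := by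
    rw [← Real.exp_add]; congr 1; ring
  have : L * Real.exp (-L / 2) * Real.cosh (L / 6) =
      L / 2 * (Real.exp (-(L / 3)) + Real.exp (-(2 * L / 3))) := by
    rw [Real.cosh_eq, ← e1, ← e2]; ring
  rw [this]
  norm_num at h3
  linarith

lemma sinh_le_mul_cosh (x : ℝ) (hx : 0 ≤ x) : Real.sinh x ≤ x * Real.cosh x := by
  have hmono : MonotoneOn (fun x : ℝ => x * Real.cosh x - Real.sinh x) (Set.Ici 0) := by
    apply monotoneOn_of_deriv_nonneg (convex_Ici 0)
    · fun_prop
    · fun_prop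
    · intro t ht
      rw [interior_Ici] at ht
      have hd : HasDerivAt (fun x : ℝ => x * Real.cosh x - Real.sinh x)
          (1 * Real.cosh t + t * Real.sinh t - Real.cosh t) t :=
        ((hasDerivAt_id t).mul (Real.hasDerivAt_cosh t)).sub (Real.hasDerivAt_sinh t)
      rw [hd.deriv]
      have := mul_nonneg (le_of_lt ht) (Real.sinh_nonneg_iff.2 (le_of_lt ht))
      linarith
  have := hmono (Set.self_mem_Ici) (Set.mem_Ici.2 hx) hx
  simp at this
  linarith

lemma aleph_sub (a b c d : ℝ → ℂ) (ζ y : ℝ) :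
    aleph a b ζ y - aleph c d ζ y = aleph (fun z => a z - c z) (fun z => b z - d z) ζ y := by
  unfold aleph; ring

lemma aleph_bound (a b : ℝ → ℂ) (ζ y : ℝ) (hy : y ∈ Set.Ioo (0 : ℝ) 1) :
    ‖aleph a b ζ y‖ ≤ Real.cosh ζ * ‖a ζ‖ + Real.cosh ζ * ‖b ζ‖ := by
  have hz : 0 ≤ |ζ| := abs_nonneg ζ
  have h0 : 0 ≤ (1 - y) * |ζ| := mul_nonneg (by linarith [hy.2]) hz
  have h1 : (1 - y) * |ζ| ≤ |ζ| := by nlinarith [hy.1]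
  have hc : Real.cosh ((1 - y) * |ζ|) ≤ Real.cosh ζ := by
    rw [← Real.cosh_abs ζ, Real.cosh_le_cosh, abs_of_nonneg h0, abs_abs]
    exact h1
  have hs0 : 0 ≤ Real.sinh ((1 - y) * |ζ|) := Real.sinh_nonneg_iff.2 h0
  have hs : Real.sinh ((1 - y) * |ζ|) / |ζ| ≤ Real.cosh ζ := by
    rcases hz.eq_or_lt with h | h
    · rw [← h]; simp [(Real.cosh_pos ζ).le]
    · rw [div_le_iff₀ h]
      have := sinh_le_mul_cosh _ h0
      have h3 : (1 - y) * |ζ| * Real.cosh ((1 - y) * |ζ|) ≤ |ζ| * Real.cosh ζ :=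
        mul_le_mul h1 hc (Real.cosh_pos _).le hz
      linarith
  have e : aleph a b ζ y = ((Real.cosh ((1 - y) * |ζ|) : ℝ) : ℂ) * a ζ
      - ((Real.sinh ((1 - y) * |ζ|) / |ζ| : ℝ) : ℂ) * b ζ := by
    unfold aleph
    have : (y - 1) * |ζ| = -((1 - y) * |ζ|) := by ring
    rw [this, Real.cosh_eq, Real.sinh_eq]
    push_cast
    field_simp
  rw [e]
  refine (norm_sub_le _ _).trans ?_
  rw [norm_mul, norm_mul, Complex.norm_real, Complex.norm_real, Real.norm_eq_abs,
    Real.norm_eq_abs, abs_of_pos (Real.cosh_pos _), abs_of_nonneg (div_nonneg hs0 hz)]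
  gcongr

lemma half_estimate (ε : ℝ) (hε0 : 0 < ε) (L : ℝ) (hL : 0 < L) (hLε : L = Real.log (1 / ε))
    (a χ : ℝ → ℂ) (ham : Measurable a)
    (hae : MemLp (fun ζ : ℝ => ((Real.exp |ζ| : ℝ) : ℂ) * a ζ) 2 (volume : Measure ℝ))
    (haz : MemLp (fun ζ : ℝ => (ζ : ℂ) * ((Real.exp |ζ| : ℝ) : ℂ) * a ζ) 2
      (volume : Measure ℝ))
    (C : ℝ) (hC : 0 < C) (hχ : MemLp χ 2 (volume : Measure ℝ))
    (hn : Real.sqrt (∫ ζ : ℝ, ‖χ ζ - a ζ‖ ^ 2) < C * Real.sqrt ε) :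
    Integrable (fun ζ : ℝ => (Real.cosh ζ *
      ‖(if |ζ| < (1 / 6) * L then χ ζ else 0) - a ζ‖) ^ 2) ∧
    ∫ ζ : ℝ, (Real.cosh ζ * ‖(if |ζ| < (1 / 6) * L then χ ζ else 0) - a ζ‖) ^ 2 <
      (Real.sqrt (C ^ 2 + 36 * ∫ ζ : ℝ, ‖(ζ : ℂ) * a ζ * ((Real.exp |ζ| : ℝ) : ℂ)‖ ^ 2)
        * L⁻¹) ^ 2 := by
  have ha : MemLp a 2 (volume : Measure ℝ) := by
    refine hae.of_le ham.aestronglyMeasurable (Filter.Eventually.of_forall fun ζ => ?_)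
    rw [norm_mul, Complex.norm_real, Real.norm_eq_abs, abs_of_pos (Real.exp_pos _)]
    exact le_mul_of_one_le_left (norm_nonneg _) (Real.one_le_exp (abs_nonneg _))
  have hd : Integrable (fun ζ => ‖χ ζ - a ζ‖ ^ 2) := (hχ.sub ha).integrable_norm_pow (by norm_num)
  have hz : Integrable (fun ζ : ℝ => ‖(ζ : ℂ) * a ζ * ((Real.exp |ζ| : ℝ) : ℂ)‖ ^ 2) := by
    have := haz.integrable_norm_pow (by norm_num)
    refine this.congr (Filter.Eventually.of_forall fun ζ => ?_)
    simp only [norm_mul]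
    simp
    ring
  set K := Real.cosh (L / 6) with hK
  have hKpos : 0 < K := Real.cosh_pos _
  have hpt : ∀ ζ : ℝ, (Real.cosh ζ * ‖(if |ζ| < (1 / 6) * L then χ ζ else 0) - a ζ‖) ^ 2 ≤
      K ^ 2 * ‖χ ζ - a ζ‖ ^ 2 +
        36 / L ^ 2 * ‖(ζ : ℂ) * a ζ * ((Real.exp |ζ| : ℝ) : ℂ)‖ ^ 2 := by
    intro ζ
    split_ifs with h
    · have : Real.cosh ζ ≤ K := by
        rw [hK, Real.cosh_le_cosh, abs_of_pos (by positivity : 0 < L / 6)]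
        linarith
      have h2 : (Real.cosh ζ * ‖χ ζ - a ζ‖) ^ 2 ≤ (K * ‖χ ζ - a ζ‖) ^ 2 := by
        have := (Real.cosh_pos ζ).le
        gcongr
      rw [mul_pow K] at h2
      have : 0 ≤ 36 / L ^ 2 * ‖(ζ : ℂ) * a ζ * ((Real.exp |ζ| : ℝ) : ℂ)‖ ^ 2 := by positivity
      linarith
    · push Not at h
      have h6 : 1 ≤ 6 / L * |ζ| := by
        rw [div_mul_eq_mul_div, le_div_iff₀ hL]; linarith
      have hc : Real.cosh ζ ≤ Real.exp |ζ| := by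
        rw [← Real.cosh_abs, Real.cosh_eq]
        have : Real.exp (-|ζ|) ≤ Real.exp |ζ| := Real.exp_le_exp.2 (by linarith [abs_nonneg ζ])
        linarith
      have h2 : Real.cosh ζ * ‖(0 : ℂ) - a ζ‖ ≤
          6 / L * ‖(ζ : ℂ) * a ζ * ((Real.exp |ζ| : ℝ) : ℂ)‖ := by
        rw [zero_sub, norm_neg, norm_mul, norm_mul, Complex.norm_real, Complex.norm_real,
          Real.norm_eq_abs, Real.norm_eq_abs, abs_of_pos (Real.exp_pos _)]
        calc Real.cosh ζ * ‖a ζ‖ ≤ 1 * (Real.exp |ζ| * ‖a ζ‖) := by rw [one_mul]; gcongr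
          _ ≤ (6 / L * |ζ|) * (Real.exp |ζ| * ‖a ζ‖) := by gcongr
          _ = _ := by ring
      have h3 : (Real.cosh ζ * ‖(0 : ℂ) - a ζ‖) ^ 2 ≤
          (6 / L * ‖(ζ : ℂ) * a ζ * ((Real.exp |ζ| : ℝ) : ℂ)‖) ^ 2 := by
        have := (Real.cosh_pos ζ).le
        gcongr
      rw [mul_pow (6 / L), div_pow] at h3
      have : 0 ≤ K ^ 2 * ‖χ ζ - a ζ‖ ^ 2 := by positivity
      norm_num at h3 ⊢
      norm_num at this
      linarith
  have hg : Integrable (fun ζ : ℝ => K ^ 2 * ‖χ ζ - a ζ‖ ^ 2 +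
        36 / L ^ 2 * ‖(ζ : ℂ) * a ζ * ((Real.exp |ζ| : ℝ) : ℂ)‖ ^ 2) :=
    (hd.const_mul _).add (hz.const_mul _)
  have hmeas : AEStronglyMeasurable (fun ζ : ℝ => (Real.cosh ζ *
      ‖(if |ζ| < (1 / 6) * L then χ ζ else 0) - a ζ‖) ^ 2) volume := by
    have hS : MeasurableSet {ζ : ℝ | |ζ| < (1 / 6) * L} :=
      measurableSet_lt (by fun_prop) (by fun_prop)
    have h1 : AEStronglyMeasurable (fun ζ : ℝ => if |ζ| < (1 / 6) * L then χ ζ else 0) volume :=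
      (hχ.1.indicator hS).congr (Filter.Eventually.of_forall fun ζ => by
        simp [Set.indicator])
    exact ((Real.continuous_cosh.aestronglyMeasurable).mul
      (h1.sub ham.aestronglyMeasurable).norm).pow 2
  refine ⟨hg.mono' hmeas (Filter.Eventually.of_forall fun ζ => ?_), ?_⟩
  · rw [Real.norm_eq_abs, abs_of_nonneg (sq_nonneg _)]
    exact hpt ζ
  have hle := integral_mono_of_nonneg (μ := (volume : Measure ℝ))
    (Filter.Eventually.of_forall fun ζ => sq_nonneg (Real.cosh ζ *
      ‖(if |ζ| < (1 / 6) * L then χ ζ else 0) - a ζ‖)) hg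
    (Filter.Eventually.of_forall hpt)
  refine hle.trans_lt ?_
  rw [integral_add (hd.const_mul _) (hz.const_mul _), integral_const_mul, integral_const_mul]
  have hZ : 0 ≤ ∫ ζ : ℝ, ‖(ζ : ℂ) * a ζ * ((Real.exp |ζ| : ℝ) : ℂ)‖ ^ 2 :=
    integral_nonneg fun ζ => by positivity
  rw [mul_pow, Real.sq_sqrt (by positivity)]
  have hI : ∫ ζ : ℝ, ‖χ ζ - a ζ‖ ^ 2 < C ^ 2 * ε := by
    have := (Real.sqrt_lt' (by positivity)).1 hn
    rwa [mul_pow, Real.sq_sqrt hε0.le] at this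
  have hkey : L * Real.exp (-L / 2) * K < 1 := cosh_eps_bound L hL
  have hexp : Real.exp (-L / 2) ^ 2 = ε := by
    rw [← Real.exp_nat_mul, hLε, one_div, Real.log_inv]
    push_cast
    rw [show (2 : ℝ) * (- -Real.log ε / 2) = Real.log ε by ring, Real.exp_log hε0]
  have hk2 : L ^ 2 * ε * K ^ 2 < 1 := by
    rw [← hexp, ← mul_pow, ← mul_pow]
    exact pow_lt_one₀ (by positivity) hkey (by norm_num)
  have hk3 : ε * K ^ 2 ≤ (L⁻¹) ^ 2 := by
    rw [inv_pow, ← one_div, le_div_iff₀ (by positivity)]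
    linarith
  have h1 : K ^ 2 * ∫ ζ : ℝ, ‖χ ζ - a ζ‖ ^ 2 < K ^ 2 * (C ^ 2 * ε) := by gcongr
  have h2 : C ^ 2 * (ε * K ^ 2) ≤ C ^ 2 * (L⁻¹) ^ 2 := by gcongr
  have h3 : 36 / L ^ 2 = 36 * (L⁻¹) ^ 2 := by rw [inv_pow]; rfl
  rw [h3]
  linarith

/-- Theorem 2 of the paper, on the Fourier side: with data `χ_φ, χ_ψ`
approximating `φ̂, ψ̂` at rates `C₃ ε` resp. `C ε^{1/2}`, truncating at frequency
`(1/6) ln(1/ε)` yields a regularized solution whose `L²(ℝ × (0,1))` distance to the exact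
one is `< (C₄ + C₅)(ln(1/ε))⁻¹` where `C₄ = √(C₃² + 36 ‖ζ φ̂(ζ) e^{|ζ|}‖²)` and
`C₅ = √(C² + 36 ‖ζ ψ̂(ζ) e^{|ζ|}‖²)`. -/
theorem regularized_cauchy_laplace_estimate (ε : ℝ) (hε0 : 0 < ε)
    (hε1 : ε < Real.exp (-3))
    (φhat ψhat χφ χψ : ℝ → ℂ)
    (hφm : Measurable φhat) (hψm : Measurable ψhat)
    (hφe : MemLp (fun ζ : ℝ => ((Real.exp |ζ| : ℝ) : ℂ) * φhat ζ) 2 (volume : Measure ℝ))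
    (hψe : MemLp (fun ζ : ℝ => ((Real.exp |ζ| : ℝ) : ℂ) * ψhat ζ) 2 (volume : Measure ℝ))
    (hφz : MemLp (fun ζ : ℝ => (ζ : ℂ) * ((Real.exp |ζ| : ℝ) : ℂ) * φhat ζ) 2
      (volume : Measure ℝ))
    (hψz : MemLp (fun ζ : ℝ => (ζ : ℂ) * ((Real.exp |ζ| : ℝ) : ℂ) * ψhat ζ) 2
      (volume : Measure ℝ))
    (C₃ C : ℝ) (hC₃ : 0 < C₃) (hC : 0 < C)
    (hχφ : MemLp χφ 2 (volume : Measure ℝ)) (hχψ : MemLp χψ 2 (volume : Measure ℝ))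
    (hχφn : Real.sqrt (∫ ζ : ℝ, ‖χφ ζ - φhat ζ‖ ^ 2) < C₃ * ε)
    (hχψn : Real.sqrt (∫ ζ : ℝ, ‖χψ ζ - ψhat ζ‖ ^ 2) < C * Real.sqrt ε) :
    Real.sqrt (∫ ζ : ℝ, ∫ y in Set.Ioo (0 : ℝ) 1,
        ‖aleph (fun z => if |z| < (1 / 6) * Real.log (1 / ε) then χφ z else 0)
            (fun z => if |z| < (1 / 6) * Real.log (1 / ε) then χψ z else 0) ζ y -
          aleph φhat ψhat ζ y‖ ^ 2) <
      (Real.sqrt (C₃ ^ 2 +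
            36 * ∫ ζ : ℝ, ‖(ζ : ℂ) * φhat ζ * ((Real.exp |ζ| : ℝ) : ℂ)‖ ^ 2) +
          Real.sqrt (C ^ 2 +
            36 * ∫ ζ : ℝ, ‖(ζ : ℂ) * ψhat ζ * ((Real.exp |ζ| : ℝ) : ℂ)‖ ^ 2)) *
        (Real.log (1 / ε))⁻¹ := by
  have hlog : 3 < Real.log (1 / ε) := by
    rw [one_div, Real.log_inv]
    have := (Real.log_lt_iff_lt_exp hε0).2 hε1
    linarith
  generalize hLdef : Real.log (1 / ε) = L at *
  have hL : 0 < L := by linarith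
  have hε1' : ε ≤ 1 := hε1.le.trans (Real.exp_le_one_iff.2 (by norm_num))
  have hεs : ε ≤ Real.sqrt ε := by
    apply Real.le_sqrt_of_sq_le
    nlinarith
  obtain ⟨iP, hP⟩ := half_estimate ε hε0 L hL hLdef.symm φhat χφ hφm hφe hφz C₃ hC₃ hχφ
    (hχφn.trans_le (by gcongr))
  obtain ⟨iQ, hQ⟩ := half_estimate ε hε0 L hL hLdef.symm ψhat χψ hψm hψe hψz C hC hχψ hχψn
  have hZ1 : 0 ≤ ∫ ζ : ℝ, ‖(ζ : ℂ) * φhat ζ * ((Real.exp |ζ| : ℝ) : ℂ)‖ ^ 2 :=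
    integral_nonneg fun ζ => by positivity
  have hZ2 : 0 ≤ ∫ ζ : ℝ, ‖(ζ : ℂ) * ψhat ζ * ((Real.exp |ζ| : ℝ) : ℂ)‖ ^ 2 :=
    integral_nonneg fun ζ => by positivity
  rw [add_mul]
  have hc : 0 < Real.sqrt (C₃ ^ 2 +
      36 * ∫ ζ : ℝ, ‖(ζ : ℂ) * φhat ζ * ((Real.exp |ζ| : ℝ) : ℂ)‖ ^ 2) * L⁻¹ := by positivity
  have hd : 0 < Real.sqrt (C ^ 2 +
      36 * ∫ ζ : ℝ, ‖(ζ : ℂ) * ψhat ζ * ((Real.exp |ζ| : ℝ) : ℂ)‖ ^ 2) * L⁻¹ := by positivity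
  generalize Real.sqrt (C₃ ^ 2 +
      36 * ∫ ζ : ℝ, ‖(ζ : ℂ) * φhat ζ * ((Real.exp |ζ| : ℝ) : ℂ)‖ ^ 2) * L⁻¹ = c at *
  generalize Real.sqrt (C ^ 2 +
      36 * ∫ ζ : ℝ, ‖(ζ : ℂ) * ψhat ζ * ((Real.exp |ζ| : ℝ) : ℂ)‖ ^ 2) * L⁻¹ = d at *
  rw [Real.sqrt_lt' (by positivity)]
  set P : ℝ → ℝ := fun ζ => Real.cosh ζ *
    ‖(if |ζ| < (1 / 6) * L then χφ ζ else 0) - φhat ζ‖ with hPdef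
  set Q : ℝ → ℝ := fun ζ => Real.cosh ζ *
    ‖(if |ζ| < (1 / 6) * L then χψ ζ else 0) - ψhat ζ‖ with hQdef
  change Integrable (fun ζ => P ζ ^ 2) at iP
  change Integrable (fun ζ => Q ζ ^ 2) at iQ
  change ∫ ζ, P ζ ^ 2 < _ at hP
  change ∫ ζ, Q ζ ^ 2 < _ at hQ
  have hpt : ∀ ζ : ℝ, (∫ y in Set.Ioo (0 : ℝ) 1,
        ‖aleph (fun z => if |z| < (1 / 6) * L then χφ z else 0)
            (fun z => if |z| < (1 / 6) * L then χψ z else 0) ζ y -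
          aleph φhat ψhat ζ y‖ ^ 2) ≤ (1 + d / c) * P ζ ^ 2 + (1 + c / d) * Q ζ ^ 2 := by
    intro ζ
    have h1 : (∫ y in Set.Ioo (0 : ℝ) 1,
        ‖aleph (fun z => if |z| < (1 / 6) * L then χφ z else 0)
            (fun z => if |z| < (1 / 6) * L then χψ z else 0) ζ y -
          aleph φhat ψhat ζ y‖ ^ 2) ≤ ∫ y in Set.Ioo (0 : ℝ) 1, (P ζ + Q ζ) ^ 2 := by
      apply integral_mono_of_nonneg
      · exact Filter.Eventually.of_forall fun y => sq_nonneg _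
      · exact integrable_const _
      · filter_upwards [ae_restrict_mem measurableSet_Ioo] with y hy
        rw [aleph_sub]
        have := aleph_bound
          (fun z => (if |z| < (1 / 6) * L then χφ z else 0) - φhat z)
          (fun z => (if |z| < (1 / 6) * L then χψ z else 0) - ψhat z) ζ y hy
        exact pow_le_pow_left₀ (norm_nonneg _) this 2
    have h2 : ∫ y in Set.Ioo (0 : ℝ) 1, (P ζ + Q ζ) ^ 2 = (P ζ + Q ζ) ^ 2 := by
      simp
    rw [h2] at h1
    refine h1.trans ?_
    have h3 : (1 + d / c) * P ζ ^ 2 + (1 + c / d) * Q ζ ^ 2 - (P ζ + Q ζ) ^ 2 =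
        (d * P ζ - c * Q ζ) ^ 2 / (c * d) := by
      field_simp
      ring
    have h4 : 0 ≤ (d * P ζ - c * Q ζ) ^ 2 / (c * d) := by positivity
    linarith
  have hle := integral_mono_of_nonneg (μ := (volume : Measure ℝ))
    (Filter.Eventually.of_forall fun ζ => integral_nonneg fun y => sq_nonneg _)
    ((iP.const_mul (1 + d / c)).add (iQ.const_mul (1 + c / d)))
    (Filter.Eventually.of_forall hpt)
  refine hle.trans_lt ?_
  simp only [Pi.add_apply]
  rw [integral_add (iP.const_mul _) (iQ.const_mul _), integral_const_mul, integral_const_mul]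
  have h1 : (1 + d / c) * ∫ ζ, P ζ ^ 2 < (1 + d / c) * c ^ 2 := by gcongr
  have h2 : (1 + c / d) * ∫ ζ, Q ζ ^ 2 < (1 + c / d) * d ^ 2 := by gcongr
  have h3 : (1 + d / c) * c ^ 2 + (1 + c / d) * d ^ 2 = (c + d) ^ 2 := by
    field_simp
    ring
  linarith
end

section
/- Let f : ℝ × (1,∞) × ℝ → ℝ and p ∈ L¹(ℝ × (1,∞)) be measurable with |f(ξ,η,a) − f(ξ,η,b)| ≤ |p(ξ,η)| |a − b| for all ξ ∈ ℝ, η > 1, a, b ∈ ℝ, and suppose L := ( ∫_ℝ [ ∫_1^∞ ∫_ℝ ((η−1)/((x−ξ)² + (1−η)²)) |p(ξ,η)| dξ dη ]² dx )^{1/2} < ∞. For bounded measurable u : ℝ × (1,∞) → ℝ define k_y(x) = (1/π) ∫_1^∞ ∫_ℝ ((1−η)/((x−ξ)² + (1−η)²)) f(ξ,η,u(ξ,η)) dξ dη, and similarly k_y^ε using another bounded measurable u_ε in place of u. Then ‖k_y^ε − k_y‖_{L²(ℝ)} ≤ (L/π) · sup_{(ξ,η) ∈ ℝ × (1,∞)}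 |u(ξ,η) − u_ε(ξ,η)|. -/
open MeasureTheory

lemma ker_eq (ξ η : ℝ) (h : 1 < η) (x : ℝ) :
    (η - 1) / ((x - ξ) ^ 2 + (1 - η) ^ 2) =
      (η - 1)⁻¹ * (1 + ((x - ξ) / (η - 1)) ^ 2)⁻¹ := by
  have h0 : η - 1 ≠ 0 := by linarith
  have h1 : (x - ξ) ^ 2 + (1 - η) ^ 2 ≠ 0 := by
    have : 0 < (1 - η) ^ 2 := by
      rw [show (1 - η) ^ 2 = (η - 1) ^ 2 by ring]; positivity
    positivity
  have h2 : 1 + ((x - ξ) / (η - 1)) ^ 2 ≠ 0 := by positivity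
  have h3 : (x - ξ) ^ 2 + (1 - η) ^ 2 = (η - 1) ^ 2 * (1 + ((x - ξ) / (η - 1)) ^ 2) := by
    field_simp
    ring
  rw [h3]
  field_simp

lemma ker_integrable (ξ η : ℝ) (h : 1 < η) :
    Integrable (fun x : ℝ => (η - 1) / ((x - ξ) ^ 2 + (1 - η) ^ 2)) := by
  have h0 : η - 1 ≠ 0 := by linarith
  simp_rw [ker_eq ξ η h]
  exact ((integrable_inv_one_add_sq.comp_div h0).comp_sub_right ξ).const_mul _

lemma ker_integral (ξ η : ℝ) (h : 1 < η) :
    ∫ x : ℝ, (η - 1) / ((x - ξ) ^ 2 + (1 - η) ^ 2) = Real.pi := by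
  have h0 : 0 < η - 1 := by linarith
  simp_rw [ker_eq ξ η h]
  rw [integral_const_mul,
    integral_sub_right_eq_self (fun x : ℝ => (1 + (x / (η - 1)) ^ 2)⁻¹) ξ,
    Measure.integral_comp_div (fun x : ℝ => (1 + x ^ 2)⁻¹) (η - 1),
    integral_univ_inv_one_add_sq, abs_of_pos h0, smul_eq_mul]
  field_simp

lemma ker_ae (p : ℝ → ℝ → ℝ)
    (hp : Integrable (fun q : ℝ × ℝ => p q.1 q.2)
      ((volume : Measure ℝ).prod (volume.restrict (Set.Ioi 1)))) :
    ∀ᵐ x : ℝ, Integrable (fun q : ℝ × ℝ =>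
      ((q.2 - 1) / ((x - q.1) ^ 2 + (1 - q.2) ^ 2)) * |p q.1 q.2|)
      ((volume : Measure ℝ).prod (volume.restrict (Set.Ioi 1))) := by
  set μ := (volume : Measure ℝ).prod (volume.restrict (Set.Ioi (1:ℝ))) with hμ
  have hae : ∀ᵐ q ∂μ, 1 < q.2 :=
    Measure.quasiMeasurePreserving_snd.ae (ae_restrict_mem measurableSet_Ioi)
  have key : Integrable (fun z : ℝ × (ℝ × ℝ) =>
      ((z.2.2 - 1) / ((z.1 - z.2.1) ^ 2 + (1 - z.2.2) ^ 2)) * |p z.2.1 z.2.2|)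
      ((volume : Measure ℝ).prod μ) := by
    have hm : AEStronglyMeasurable (fun z : ℝ × (ℝ × ℝ) =>
      ((z.2.2 - 1) / ((z.1 - z.2.1) ^ 2 + (1 - z.2.2) ^ 2)) * |p z.2.1 z.2.2|)
      ((volume : Measure ℝ).prod μ) := by
      refine AEStronglyMeasurable.mul ?_ ?_
      · exact Measurable.aestronglyMeasurable (by fun_prop)
      · exact (hp.abs.aestronglyMeasurable).comp_snd
    rw [integrable_prod_iff' hm]
    constructor
    · filter_upwards [hae] with q hq
      exact (ker_integrable q.1 q.2 hq).mul_const _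
    · refine (hp.abs.const_mul Real.pi).congr ?_
      filter_upwards [hae] with q hq
      have h0 : 0 ≤ q.2 - 1 := by linarith
      have : ∀ x : ℝ, ‖((q.2 - 1) / ((x - q.1) ^ 2 + (1 - q.2) ^ 2)) * |p q.1 q.2|‖ =
          ((q.2 - 1) / ((x - q.1) ^ 2 + (1 - q.2) ^ 2)) * |p q.1 q.2| := by
        intro x
        exact Real.norm_of_nonneg (by positivity)
      simp only [this]
      rw [integral_mul_const, ker_integral q.1 q.2 hq]
  exact key.prod_right_ae

/-- estimate (44) in the proof of Lemma 1 of the paper: with the Lipschitz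
bound `|f(ξ,η,a) - f(ξ,η,b)| ≤ |p(ξ,η)||a-b|` and
`L = (∫ (∫_1^∞ ∫ ((η-1)/((x-ξ)² + (1-η)²)) |p(ξ,η)| dξ dη)² dx)^{1/2} < ∞`, the
derivatives `k_y, k_y^ε` of the volume potentials built from `u` and `u_ε` satisfy
`‖k_y^ε - k_y‖_{L²(ℝ)} ≤ (L/π) sup |u - u_ε|`. -/
theorem volume_potential_derivative_estimate
    (f : ℝ → ℝ → ℝ → ℝ) (p : ℝ → ℝ → ℝ)
    (hf : Measurable fun q : ℝ × ℝ × ℝ => f q.1 q.2.1 q.2.2)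
    (hp : IntegrableOn (fun q : ℝ × ℝ => p q.1 q.2) (Set.univ ×ˢ Set.Ioi 1))
    (hlip : ∀ ξ η a b : ℝ, 1 < η → |f ξ η a - f ξ η b| ≤ |p ξ η| * |a - b|)
    (hL : Integrable (fun x : ℝ =>
      (∫ η in Set.Ioi (1 : ℝ), ∫ ξ : ℝ,
          ((η - 1) / ((x - ξ) ^ 2 + (1 - η) ^ 2)) * |p ξ η|) ^ 2))
    (u uε : ℝ → ℝ → ℝ)
    (hu : Measurable fun q : ℝ × ℝ => u q.1 q.2)
    (huε : Measurable fun q : ℝ × ℝ => uε q.1 q.2)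
    (hub : ∃ C, ∀ ξ η : ℝ, |u ξ η| ≤ C)
    (huεb : ∃ C, ∀ ξ η : ℝ, |uε ξ η| ≤ C)
    (hint : ∀ x : ℝ, IntegrableOn (fun q : ℝ × ℝ =>
        ((1 - q.2) / ((x - q.1) ^ 2 + (1 - q.2) ^ 2)) * f q.1 q.2 (u q.1 q.2))
      (Set.univ ×ˢ Set.Ioi 1))
    (hintε : ∀ x : ℝ, IntegrableOn (fun q : ℝ × ℝ =>
        ((1 - q.2) / ((x - q.1) ^ 2 + (1 - q.2) ^ 2)) * f q.1 q.2 (uε q.1 q.2))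
      (Set.univ ×ˢ Set.Ioi 1))
    (S : ℝ) (hS : ∀ ξ η : ℝ, 1 < η → |u ξ η - uε ξ η| ≤ S) :
    Real.sqrt (∫ x : ℝ,
        ((1 / Real.pi) * (∫ η in Set.Ioi (1 : ℝ), ∫ ξ : ℝ,
            ((1 - η) / ((x - ξ) ^ 2 + (1 - η) ^ 2)) * f ξ η (uε ξ η)) -
          (1 / Real.pi) * (∫ η in Set.Ioi (1 : ℝ), ∫ ξ : ℝ,
            ((1 - η) / ((x - ξ) ^ 2 + (1 - η) ^ 2)) * f ξ η (u ξ η))) ^ 2) ≤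
      (Real.sqrt (∫ x : ℝ,
          (∫ η in Set.Ioi (1 : ℝ), ∫ ξ : ℝ,
              ((η - 1) / ((x - ξ) ^ 2 + (1 - η) ^ 2)) * |p ξ η|) ^ 2) / Real.pi) * S := by
  have hμ : (volume : Measure (ℝ × ℝ)).restrict (Set.univ ×ˢ Set.Ioi 1) =
      (volume : Measure ℝ).prod (volume.restrict (Set.Ioi 1)) := by
    rw [Measure.volume_eq_prod, ← Measure.prod_restrict, Measure.restrict_univ]
  unfold IntegrableOn at hp hint hintε
  rw [hμ] at hp
  simp only [hμ] at hint hintε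
  have hS0 : 0 ≤ S := (abs_nonneg _).trans (hS 0 2 (by norm_num))
  have hpi := Real.pi_pos
  have hae : ∀ᵐ q ∂((volume : Measure ℝ).prod (volume.restrict (Set.Ioi (1:ℝ)))), 1 < q.2 :=
    Measure.quasiMeasurePreserving_snd.ae (ae_restrict_mem measurableSet_Ioi)
  rw [show ∀ A : ℝ, A / Real.pi * S = (S / Real.pi) * A by intro A; ring,
    ← Real.sqrt_sq (show 0 ≤ S / Real.pi by positivity),
    ← Real.sqrt_mul (by positivity), ← integral_const_mul]
  apply Real.sqrt_le_sqrt
  refine integral_mono_of_nonneg (Filter.Eventually.of_forall fun x => sq_nonneg _)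
    (hL.const_mul _) ?_
  filter_upwards [ker_ae p hp] with x hx
  have e1 := integral_prod_symm _ (hint x)
  have e2 := integral_prod_symm _ (hintε x)
  have e3 := integral_prod_symm _ hx
  dsimp only at e1 e2 e3
  rw [← e1, ← e2, ← e3, ← mul_sub, ← integral_sub (hintε x) (hint x), ← mul_pow]
  apply sq_le_sq'
  all_goals
    have hb : |∫ q : ℝ × ℝ, (((1 - q.2) / ((x - q.1) ^ 2 + (1 - q.2) ^ 2)) *
        f q.1 q.2 (uε q.1 q.2) - ((1 - q.2) / ((x - q.1) ^ 2 + (1 - q.2) ^ 2)) *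
        f q.1 q.2 (u q.1 q.2)) ∂((volume : Measure ℝ).prod (volume.restrict (Set.Ioi (1:ℝ))))| ≤
        S * ∫ q : ℝ × ℝ, ((q.2 - 1) / ((x - q.1) ^ 2 + (1 - q.2) ^ 2)) * |p q.1 q.2|
          ∂((volume : Measure ℝ).prod (volume.restrict (Set.Ioi (1:ℝ)))) := by
      rw [← integral_const_mul, ← Real.norm_eq_abs]
      refine norm_integral_le_of_norm_le (hx.const_mul S) ?_
      filter_upwards [hae] with q hq
      have h0 : 0 ≤ q.2 - 1 := by linarith
      rw [← mul_sub, Real.norm_eq_abs, abs_mul, abs_div, abs_sub_comm, abs_of_nonneg h0,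
        abs_of_nonneg (show 0 ≤ (x - q.1) ^ 2 + (1 - q.2) ^ 2 by positivity)]
      have h1 := hlip q.1 q.2 (uε q.1 q.2) (u q.1 q.2) hq
      have h2 := hS q.1 q.2 hq
      rw [abs_sub_comm] at h2
      have h3 : |f q.1 q.2 (uε q.1 q.2) - f q.1 q.2 (u q.1 q.2)| ≤ |p q.1 q.2| * S :=
        h1.trans (by gcongr)
      calc _ ≤ (q.2 - 1) / ((x - q.1) ^ 2 + (1 - q.2) ^ 2) * (|p q.1 q.2| * S) := by gcongr
        _ = _ := by ring
    rw [abs_le] at hb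
    have hc := mul_le_mul_of_nonneg_left hb.1 (show 0 ≤ 1 / Real.pi by positivity)
    have hd := mul_le_mul_of_nonneg_left hb.2 (show 0 ≤ 1 / Real.pi by positivity)
    first
      | (refine le_trans (le_of_eq ?_) hc; ring)
      | (refine le_trans hd (le_of_eq ?_); ring)
end
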